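/- For complex bodies K, T ⊆ ℂⁿ (unit balls of norms on ℂⁿ, viewed as convex bodies in ℝ^{2n}) and any λ ∈ [0,1], the volume of the logarithmic mean L_λ(K,T) = {x : ⟨x,θ⟩ ≤ h_K(θ)^{1-λ} h_T(θ)^λ for all θ} satisfies |L_λ(K,T)| ≥ |K|^{1-λ} |T|^λ. -/

import Mathlib

open MeasureTheory Set

noncomputable section

/-- A complex body in ℂⁿ ≅ ℝ^{2n}: convex, origin-symmetric, compact, nonempty
interior, and invariant under complex rotations. -/
def IsCxBody {n : ℕ} (K : Set (Fin n → ℂ)) : Prop :=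
  Convex ℝ K ∧ K = -K ∧ IsCompact K ∧ (interior K).Nonempty ∧
    ∀ φ : ℝ, (fun z : Fin n → ℂ => fun j => Complex.exp (φ * Complex.I) * z j) '' K = K

/-- The real inner product Re⟨x, θ⟩ on ℂⁿ ≅ ℝ^{2n}. -/
def crinner {n : ℕ} (x θ : Fin n → ℂ) : ℝ := (∑ j, x j * (starRingEnd ℂ) (θ j)).re

/-- Support function of a set in ℂⁿ, with respect to the real inner product. -/
def csuppFn {n : ℕ} (K : Set (Fin n → ℂ)) (θ : Fin n → ℂ) : ℝ :=
  sSup ((fun x => crinner x θ) '' K)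

/-- Logarithmic mean of two bodies in ℂⁿ. -/
def clogMean {n : ℕ} (l : ℝ) (K T : Set (Fin n → ℂ)) : Set (Fin n → ℂ) :=
  {x | ∀ θ, crinner x θ ≤ csuppFn K θ ^ (1 - l) * csuppFn T θ ^ l}

open Filter Topology
open scoped ContDiff ComplexConjugate

/-!
For linear forms `ℓᵢ` on `ℂⁿ`, put `φ_t = ∑ᵢ exp (bᵢ t) (|ℓᵢ| / rᵢ) ^ (2 p)`. Writing `φ` for
`φ_t` and `φ'`, `φ''` for its derivatives in `t`, the function `t ↦ log ∫ exp (-φ_t)` is concave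
as soon as `Var φ' ≤ ∫ φ''` for the probability measure with density proportional to `exp (-φ)`.
This is a Brascamp–Lieb inequality for circle-invariant functions and plurisubharmonic weights of
the form `φ = ∑ᵢ |Fᵢ|²` with `Fᵢ` holomorphic. It is proved by duality. Bochner's identity gives
the bound for functions paired with the range of the weighted Laplacian, whose components are
`e^φ ∂_z̄ e^{-φ} ∂_z`. A function which is orthogonal to this range corresponds to a weakly
holomorphic one, by mollification and Caccioppoli's estimate, and so is orthogonal, by the mean
value property, to every circle-invariant function of mean zero.

With `bᵢ = 2 p log (rᵢ / sᵢ)` and `p → ∞`, the concavity becomes the log-concavity of the volume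
of the polydiscs `{|ℓᵢ| ≤ rᵢ}` in the polyradius `r`. By circle invariance, `K` and `T` lie in
the polydiscs whose polyradii are given by the support functions in finitely many directions, and
their logarithmic mean is the decreasing limit of such polydiscs, over finite initial segments of
a dense sequence of directions and with radii enlarged by `1 / (N + 1)`.
-/

/-- The first-order operator `(∂_v + a ∂_{iv}) / 2` on complex-valued functions. For `a = -i` it is
the Wirtinger derivative `∂/∂z` in the complex direction `v`, for `a = i` it is `∂/∂z̄`. -/
def wirtinger {E : Type*} [NormedAddCommGroup E] [NormedSpace ℂ E]
    (a : ℂ) (v : E) (f : E → ℂ) (x : E) : ℂ :=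
  (fderiv ℝ f x v + a * fderiv ℝ f x (Complex.I • v)) / 2

local notation "dz" => wirtinger (-Complex.I)
local notation "dzbar" => wirtinger Complex.I

section Wirtinger

variable {E : Type*} [NormedAddCommGroup E] [NormedSpace ℂ E]

variable {a b : ℂ} {v w : E} {f g : E → ℂ} {x : E}

lemma wirtinger_mul (hf : DifferentiableAt ℝ f x) (hg : DifferentiableAt ℝ g x) :
    wirtinger a v (fun y => f y * g y) x = wirtinger a v f x * g x + f x * wirtinger a v g x := by
  simp only [wirtinger, fderiv_fun_mul hf hg, add_apply, smul_apply, smul_eq_mul]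
  ring

lemma wirtinger_add (hf : DifferentiableAt ℝ f x) (hg : DifferentiableAt ℝ g x) :
    wirtinger a v (fun y => f y + g y) x = wirtinger a v f x + wirtinger a v g x := by
  simp only [wirtinger, fderiv_fun_add hf hg, add_apply]
  ring

lemma wirtinger_sub (hf : DifferentiableAt ℝ f x) (hg : DifferentiableAt ℝ g x) :
    wirtinger a v (fun y => f y - g y) x = wirtinger a v f x - wirtinger a v g x := by
  simp only [wirtinger, fderiv_fun_sub hf hg, sub_apply]
  ring

lemma wirtinger_neg : wirtinger a v (fun y => -f y) x = -wirtinger a v f x := by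
  simp only [wirtinger, fderiv_fun_neg, neg_apply]
  ring

lemma wirtinger_const (c : ℂ) : wirtinger a v (fun _ => c) x = 0 := by
  simp [wirtinger]

lemma wirtinger_const_mul (c : ℂ) (hf : DifferentiableAt ℝ f x) :
    wirtinger a v (fun y => c * f y) x = c * wirtinger a v f x := by
  simp [wirtinger_mul (differentiableAt_const c) hf, wirtinger_const]

lemma wirtinger_sum {ι : Type*} {s : Finset ι} {F : ι → E → ℂ}
    (hF : ∀ i ∈ s, DifferentiableAt ℝ (F i) x) :
    wirtinger a v (fun y => ∑ i ∈ s, F i y) x = ∑ i ∈ s, wirtinger a v (F i) x := by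
  simp only [wirtinger, fderiv_fun_sum hF, sum_apply, Finset.sum_div, Finset.mul_sum,
    Finset.sum_add_distrib, add_div]

lemma wirtinger_cexp (hf : DifferentiableAt ℝ f x) :
    wirtinger a v (fun y => Complex.exp (f y)) x = Complex.exp (f x) * wirtinger a v f x := by
  simp only [wirtinger, hf.hasFDerivAt.cexp.fderiv, smul_apply, smul_eq_mul]
  ring

lemma wirtinger_conj (hf : DifferentiableAt ℝ f x) :
    wirtinger a v (fun y => conj (f y)) x = conj (wirtinger (conj a) v f x) := by
  have hconj : fderiv ℝ (fun y => conj (f y)) x =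
      (Complex.conjCLE : ℂ →L[ℝ] ℂ).comp (fderiv ℝ f x) :=
    ((Complex.conjCLE : ℂ →L[ℝ] ℂ).hasFDerivAt.comp x hf.hasFDerivAt).fderiv
  simp [wirtinger, hconj, Complex.conj_ofNat]

lemma dz_conj (hf : DifferentiableAt ℝ f x) :
    dz v (fun y => conj (f y)) x = conj (dzbar v f x) := by
  simp [wirtinger_conj hf]

lemma dzbar_conj (hf : DifferentiableAt ℝ f x) :
    dzbar v (fun y => conj (f y)) x = conj (dz v f x) := by
  simp [wirtinger_conj hf]

@[fun_prop]
lemma contDiff_ofReal_comp {n : WithTop ℕ∞} {φ : E → ℝ} (hφ : ContDiff ℝ n φ) :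
    ContDiff ℝ n (fun y => (φ y : ℂ)) :=
  Complex.ofRealCLM.contDiff.comp hφ

@[fun_prop]
lemma contDiff_conj_comp {n : WithTop ℕ∞} (hf : ContDiff ℝ n f) :
    ContDiff ℝ n (fun y => conj (f y)) :=
  Complex.conjCLE.contDiff.comp hf

lemma wirtinger_comp_const_sub {y : E} (hf : DifferentiableAt ℝ f (x - y)) :
    wirtinger a v (fun z => f (x - z)) y = -wirtinger a v f (x - y) := by
  have h : fderiv ℝ (fun z => f (x - z)) y = (fderiv ℝ f (x - y)).comp (-.id ℝ E) :=
    (hf.hasFDerivAt.comp y ((hasFDerivAt_id y).const_sub x)).fderiv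
  simp only [wirtinger, h, ContinuousLinearMap.comp_apply, neg_apply,
    ContinuousLinearMap.id_apply, map_neg]
  ring

lemma norm_wirtinger_le (ha : ‖a‖ = 1) : ‖wirtinger a v f x‖ ≤ ‖fderiv ℝ f x‖ * ‖v‖ := by
  have h : ‖fderiv ℝ f x (Complex.I • v)‖ ≤ ‖fderiv ℝ f x‖ * ‖v‖ := by
    simpa [norm_smul] using (fderiv ℝ f x).le_opNorm (Complex.I • v)
  rw [wirtinger, norm_div, Complex.norm_ofNat, div_le_iff₀ two_pos]
  refine (norm_add_le _ _).trans ?_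
  rw [norm_mul, ha, one_mul]
  linarith [(fderiv ℝ f x).le_opNorm v]

lemma norm_wirtinger_ofReal_le {χ : E → ℝ} (ha : ‖a‖ = 1) (hχ : DifferentiableAt ℝ χ x) :
    ‖wirtinger a v (fun y => (χ y : ℂ)) x‖ ≤ ‖fderiv ℝ χ x‖ * ‖v‖ := by
  have hfderiv : fderiv ℝ (fun y => (χ y : ℂ)) x = Complex.ofRealCLM.comp (fderiv ℝ χ x) :=
    (Complex.ofRealCLM.hasFDerivAt.comp x hχ.hasFDerivAt).fderiv
  refine (norm_wirtinger_le ha).trans (mul_le_mul_of_nonneg_right ?_ (norm_nonneg v))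
  simpa only [hfderiv, Complex.ofRealCLM_norm, one_mul] using
    Complex.ofRealCLM.opNorm_comp_le (fderiv ℝ χ x)

lemma wirtinger_of_notMem_tsupport (hx : x ∉ tsupport f) : wirtinger a v f x = 0 := by
  simp [wirtinger, fderiv_of_notMem_tsupport (𝕜 := ℝ) hx]

lemma tsupport_wirtinger_subset : tsupport (wirtinger a v f) ⊆ tsupport f :=
  closure_minimal (fun _ hy => not_imp_comm.1 wirtinger_of_notMem_tsupport hy) (isClosed_tsupport f)

@[fun_prop]
lemma contDiff_wirtinger (hf : ContDiff ℝ ∞ f) : ContDiff ℝ ∞ (wirtinger a v f) := by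
  have := hf.fderiv_right (m := ∞) (by simp)
  unfold wirtinger
  fun_prop

@[fun_prop]
lemma differentiableAt_wirtinger (hf : ContDiff ℝ ∞ f) : DifferentiableAt ℝ (wirtinger a v f) x :=
  (contDiff_wirtinger hf).differentiable (by simp) x

lemma hasCompactSupport_wirtinger (hf : HasCompactSupport f) :
    HasCompactSupport (wirtinger a v f) :=
  HasCompactSupport.intro hf fun _ hx => wirtinger_of_notMem_tsupport hx

lemma fderiv_wirtinger (hf : ContDiffAt ℝ 2 f x) (u : E) :
    fderiv ℝ (wirtinger a v f) x u =
      (fderiv ℝ (fderiv ℝ f) x u v + a * fderiv ℝ (fderiv ℝ f) x u (Complex.I • v)) / 2 := by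
  have hf' : DifferentiableAt ℝ (fderiv ℝ f) x :=
    (hf.fderiv_right (m := 1) (by norm_num)).differentiableAt one_ne_zero
  have heval (w : E) :
      HasFDerivAt (fun y => fderiv ℝ f y w) ((fderiv ℝ (fderiv ℝ f) x).flip w) x := by
    simpa using hf'.hasFDerivAt.clm_apply (hasFDerivAt_const w x)
  have h : HasFDerivAt (wirtinger a v f) _ x :=
    ((heval v).add ((heval (Complex.I • v)).const_mul a)).mul_const (2⁻¹ : ℂ)
  rw [h.fderiv]
  simp only [smul_apply, add_apply, ContinuousLinearMap.flip_apply, smul_eq_mul]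
  ring

lemma wirtinger_comm (hf : ContDiffAt ℝ 2 f x) :
    wirtinger a v (wirtinger b w f) x = wirtinger b w (wirtinger a v f) x := by
  have hsymm : IsSymmSndFDerivAt ℝ f x := hf.isSymmSndFDerivAt (by simp)
  rw [wirtinger, wirtinger]
  simp only [fderiv_wirtinger hf, hsymm.eq v, hsymm.eq (Complex.I • v)]
  ring

lemma dzbar_eq_zero (hf : DifferentiableAt ℂ f x) : dzbar v f x = 0 := by
  rw [wirtinger, hf.fderiv_restrictScalars ℝ]
  simp [← mul_assoc]

lemma map_complex_smul_of_map_I_smul (L : E →L[ℝ] ℂ)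
    (hL : L (Complex.I • v) = Complex.I * L v) (c : ℂ) : L (c • v) = c * L v := by
  have hc : c • v = c.re • v + c.im • Complex.I • v := by
    conv_lhs => rw [← Complex.re_add_im c]
    rw [add_smul, mul_smul, Complex.coe_smul, Complex.coe_smul]
  rw [hc, map_add, map_smul, map_smul, hL, Complex.real_smul, Complex.real_smul]
  linear_combination L v * Complex.re_add_im c

lemma differentiable_of_dzbar_eq_zero {κ : Type*} {e : κ → E} (he : ⊤ ≤ Submodule.span ℂ (range e))
    (hf : Differentiable ℝ f) (hd : ∀ k x, dzbar (e k) f x = 0) : Differentiable ℂ f := by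
  intro x
  have hlin (w : E) : ∀ c : ℂ, fderiv ℝ f x (c • w) = c * fderiv ℝ f x w := by
    induction he (Submodule.mem_top (x := w)) using Submodule.span_induction with
    | mem w hw =>
      obtain ⟨k, rfl⟩ := hw
      refine map_complex_smul_of_map_I_smul _ ?_
      have h := hd k x
      rw [wirtinger, div_eq_zero_iff, or_iff_left two_ne_zero] at h
      linear_combination (-Complex.I) * h + fderiv ℝ f x (Complex.I • e k) * Complex.I_mul_I
    | zero => simp
    | add u w _ _ hu hw => intro c; simp only [smul_add, map_add, hu, hw, mul_add]
    | smul b w _ hw => intro c; rw [← mul_smul, hw, hw, mul_assoc]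
  rw [differentiableAt_iff_restrictScalars ℝ (hf x)]
  exact ⟨{ fderiv ℝ f x with map_smul' := fun c w => hlin w c }, rfl⟩

lemma integral_wirtinger_mul [FiniteDimensional ℂ E] [MeasurableSpace E] [BorelSpace E]
    (μ : Measure E) [μ.IsAddHaarMeasure] (hf : ContDiff ℝ 1 f) (hg : ContDiff ℝ 1 g)
    (hc : HasCompactSupport f ∨ HasCompactSupport g) :
    ∫ x, wirtinger a v f x * g x ∂μ = -∫ x, f x * wirtinger a v g x ∂μ := by
  have := hf.continuous
  have := hg.continuous
  have := hf.continuous_fderiv one_ne_zero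
  have := hg.continuous_fderiv one_ne_zero
  have hfg : Integrable (fun x => f x * g x) μ :=
    Continuous.integrable_of_hasCompactSupport (by fun_prop)
      (hc.elim (fun h => h.mul_right) (fun h => h.mul_left))
  have hf'g (w : E) : Integrable (fun x => fderiv ℝ f x w * g x) μ :=
    Continuous.integrable_of_hasCompactSupport (by fun_prop)
      (hc.elim (fun h => (h.fderiv_apply (𝕜 := ℝ) w).mul_right) (fun h => h.mul_left))
  have hfg' (w : E) : Integrable (fun x => f x * fderiv ℝ g x w) μ :=
    Continuous.integrable_of_hasCompactSupport (by fun_prop)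
      (hc.elim (fun h => h.mul_right) (fun h => (h.fderiv_apply (𝕜 := ℝ) w).mul_left))
  have hparts (w : E) : ∫ x, fderiv ℝ f x w * g x ∂μ = -∫ x, f x * fderiv ℝ g x w ∂μ := by
    rw [integral_mul_fderiv_eq_neg_fderiv_mul_of_integrable (hf'g w) (hfg' w) hfg
      (fun x _ => hf.differentiable one_ne_zero x) (fun x _ => hg.differentiable one_ne_zero x),
      neg_neg]
  have hleft : ∫ x, wirtinger a v f x * g x ∂μ = (∫ x, fderiv ℝ f x v * g x ∂μ
      + a * ∫ x, fderiv ℝ f x (Complex.I • v) * g x ∂μ) / 2 := by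
    rw [← integral_const_mul, ← integral_add (hf'g _) ((hf'g _).const_mul _), ← integral_div]
    exact integral_congr_ae (ae_of_all _ fun x => by simp only [wirtinger]; ring)
  have hright : ∫ x, f x * wirtinger a v g x ∂μ = (∫ x, f x * fderiv ℝ g x v ∂μ
      + a * ∫ x, f x * fderiv ℝ g x (Complex.I • v) ∂μ) / 2 := by
    rw [← integral_const_mul, ← integral_add (hfg' _) ((hfg' _).const_mul _), ← integral_div]
    exact integral_congr_ae (ae_of_all _ fun x => by simp only [wirtinger]; ring)
  rw [hleft, hright, hparts, hparts]
  ring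

end Wirtinger

section WeightedInner

variable {X : Type*} [MeasurableSpace X] (μ : Measure X) (φ : X → ℝ)

/-- The Hermitian pairing of `L²(e^{-φ} μ)`, linear in the first variable. -/
def weightedInner (f g : X → ℂ) : ℂ :=
  ∫ x, f x * conj (g x) * Complex.exp (-φ x) ∂μ

lemma conj_weightedInner (f g : X → ℂ) :
    conj (weightedInner μ φ f g) = weightedInner μ φ g f := by
  rw [weightedInner, ← integral_conj, weightedInner]
  congr with x
  simp only [map_mul, Complex.conj_conj, ← Complex.exp_conj, map_neg, Complex.conj_ofReal]
  ring

lemma weightedInner_self (f : X → ℂ) :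
    weightedInner μ φ f f = (∫ x, ‖f x‖ ^ 2 * Real.exp (-φ x) ∂μ : ℝ) := by
  rw [weightedInner, ← integral_complex_ofReal]
  simp [Complex.mul_conj']

variable {φ} [TopologicalSpace X] [OpensMeasurableSpace X] [IsFiniteMeasureOnCompacts μ]

lemma integrable_weightedInner {f g : X → ℂ} (hφ : Continuous φ) (hf : Continuous f)
    (hg : Continuous g) (hgc : HasCompactSupport g) :
    Integrable (fun x => f x * conj (g x) * Complex.exp (-φ x)) μ :=
  Continuous.integrable_of_hasCompactSupport (by fun_prop)
    (((hgc.comp_left (g := conj) (map_zero _)).mul_left).mul_right)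

lemma weightedInner_sum_left {κ : Type*} [Fintype κ] {F : κ → X → ℂ} {g : X → ℂ}
    (hφ : Continuous φ) (hF : ∀ k, Continuous (F k)) (hg : Continuous g)
    (hgc : HasCompactSupport g) :
    weightedInner μ φ (fun x => ∑ k, F k x) g = ∑ k, weightedInner μ φ (F k) g := by
  simp only [weightedInner, Finset.sum_mul]
  exact integral_finsetSum _ fun k _ => integrable_weightedInner μ hφ (hF k) hg hgc

lemma weightedInner_sum_right {κ : Type*} [Fintype κ] {F : κ → X → ℂ} {g : X → ℂ}
    (hφ : Continuous φ) (hg : Continuous g) (hF : ∀ k, Continuous (F k))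
    (hFc : ∀ k, HasCompactSupport (F k)) :
    weightedInner μ φ g (fun x => ∑ k, F k x) = ∑ k, weightedInner μ φ g (F k) := by
  simp only [weightedInner, map_sum, Finset.mul_sum, Finset.sum_mul]
  exact integral_finsetSum _ fun k _ => integrable_weightedInner μ hφ hg (hF k) (hFc k)

lemma weightedInner_sub_left {f₁ f₂ g : X → ℂ} (hφ : Continuous φ) (hf₁ : Continuous f₁)
    (hf₂ : Continuous f₂) (hg : Continuous g) (hgc : HasCompactSupport g) :
    weightedInner μ φ (fun x => f₁ x - f₂ x) g =
      weightedInner μ φ f₁ g - weightedInner μ φ f₂ g := by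
  simp only [weightedInner, sub_mul]
  exact integral_sub (integrable_weightedInner μ hφ hf₁ hg hgc)
    (integrable_weightedInner μ hφ hf₂ hg hgc)

end WeightedInner

section WeightedLaplacian

variable {E : Type*} [NormedAddCommGroup E] [NormedSpace ℂ E]

/-- The operator `e^φ ∘ ∂/∂z̄ ∘ e^{-φ}` in the direction `v`: up to sign, the adjoint of `∂/∂z` in
`L²(e^{-φ})`. -/
def twistedDzbar (φ : E → ℝ) (v : E) (h : E → ℂ) (x : E) : ℂ :=
  dzbar v h x - dzbar v (fun y => (φ y : ℂ)) x * h x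

/-- The weighted Laplacian `Λ g = ∑ₖ e^φ ∂_{z̄ₖ} (e^{-φ} ∂_{zₖ} g)` along the frame `e`. -/
def weightedLaplacian {κ : Type*} [Fintype κ] (φ : E → ℝ) (e : κ → E) (g : E → ℂ) (x : E) : ℂ :=
  ∑ k, twistedDzbar φ (e k) (dz (e k) g) x

/-- The Levi form (complex Hessian) of the real function `φ` at `x` in the frame `e`, applied to the
vector with coordinates `ξ`. -/
def leviForm {κ : Type*} [Fintype κ] (φ : E → ℝ) (e : κ → E) (x : E) (ξ : κ → ℂ) : ℂ :=
  ∑ j, ∑ k, dz (e j) (dzbar (e k) fun y => (φ y : ℂ)) x * ξ k * conj (ξ j)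

variable {κ : Type*} [Fintype κ] {φ : E → ℝ} {e : κ → E} {v : E} {f g h : E → ℂ} {x : E}

lemma twistedDzbar_mul_cexp_neg (hφ : DifferentiableAt ℝ φ x) (hh : DifferentiableAt ℝ h x) :
    twistedDzbar φ v h x * Complex.exp (-φ x) =
      dzbar v (fun y => h y * Complex.exp (-φ y)) x := by
  have hneg : DifferentiableAt ℝ (fun y => -(φ y : ℂ)) x :=
    (Complex.ofRealCLM.differentiableAt.comp x hφ).fun_neg
  rw [wirtinger_mul hh hneg.cexp, wirtinger_cexp hneg, wirtinger_neg, twistedDzbar]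
  ring

@[fun_prop]
lemma contDiff_twistedDzbar (hφ : ContDiff ℝ ∞ φ) (hh : ContDiff ℝ ∞ h) :
    ContDiff ℝ ∞ (twistedDzbar φ v h) := by
  unfold twistedDzbar
  fun_prop

@[fun_prop]
lemma contDiff_weightedLaplacian (hφ : ContDiff ℝ ∞ φ) (hg : ContDiff ℝ ∞ g) :
    ContDiff ℝ ∞ (weightedLaplacian φ e g) := by
  unfold weightedLaplacian
  fun_prop

lemma twistedDzbar_of_notMem_tsupport (hx : x ∉ tsupport h) : twistedDzbar φ v h x = 0 := by
  simp [twistedDzbar, wirtinger_of_notMem_tsupport hx, image_eq_zero_of_notMem_tsupport hx]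

lemma hasCompactSupport_twistedDzbar (hh : HasCompactSupport h) :
    HasCompactSupport (twistedDzbar φ v h) :=
  HasCompactSupport.intro hh fun _ hx => twistedDzbar_of_notMem_tsupport hx

lemma hasCompactSupport_weightedLaplacian (hg : HasCompactSupport g) :
    HasCompactSupport (weightedLaplacian φ e g) :=
  HasCompactSupport.intro hg fun _ hx => Finset.sum_eq_zero fun _ _ =>
    twistedDzbar_of_notMem_tsupport fun h => hx (tsupport_wirtinger_subset h)

lemma weightedLaplacian_add (hf : ContDiff ℝ ∞ f) (hg : ContDiff ℝ ∞ g) :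
    weightedLaplacian φ e (fun y => f y + g y) x =
      weightedLaplacian φ e f x + weightedLaplacian φ e g x := by
  have hdz (k : κ) : dz (e k) (fun y => f y + g y) = fun y => dz (e k) f y + dz (e k) g y :=
    funext fun y => wirtinger_add (hf.differentiable (by simp) y) (hg.differentiable (by simp) y)
  rw [weightedLaplacian, weightedLaplacian, weightedLaplacian, ← Finset.sum_add_distrib]
  refine Finset.sum_congr rfl fun k _ => ?_
  simp only [twistedDzbar, hdz]
  rw [wirtinger_add (by fun_prop) (by fun_prop)]
  ring

lemma weightedLaplacian_const_mul (c : ℂ) (hg : ContDiff ℝ ∞ g) :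
    weightedLaplacian φ e (fun y => c * g y) x = c * weightedLaplacian φ e g x := by
  have hdz (k : κ) : dz (e k) (fun y => c * g y) = fun y => c * dz (e k) g y :=
    funext fun y => wirtinger_const_mul c (hg.differentiable (by simp) y)
  rw [weightedLaplacian, weightedLaplacian, Finset.mul_sum]
  refine Finset.sum_congr rfl fun k _ => ?_
  simp only [twistedDzbar, hdz]
  rw [wirtinger_const_mul c (by fun_prop)]
  ring

lemma dz_weightedLaplacian (hφ : ContDiff ℝ ∞ φ) (hg : ContDiff ℝ ∞ g) :
    dz v (weightedLaplacian φ e g) x =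
      ∑ k, (twistedDzbar φ (e k) (dz v (dz (e k) g)) x
        - dz v (dzbar (e k) fun y => (φ y : ℂ)) x * dz (e k) g x) := by
  have hg2 (k : κ) : ContDiffAt ℝ 2 (dz (e k) g) x :=
    (contDiff_infty.1 (contDiff_wirtinger hg) 2).contDiffAt
  unfold weightedLaplacian
  rw [wirtinger_sum fun k _ => (contDiff_twistedDzbar hφ (by fun_prop)).differentiable (by simp) x]
  refine Finset.sum_congr rfl fun k _ => ?_
  unfold twistedDzbar
  rw [wirtinger_sub (by fun_prop) (by fun_prop), wirtinger_mul (by fun_prop) (by fun_prop),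
    wirtinger_comm (hg2 k)]
  ring

lemma weightedLaplacian_comp_const_sub {ρ : E → ℂ} {y : E} (hρ : ContDiff ℝ ∞ ρ) :
    weightedLaplacian φ e (fun y => ρ (x - y)) y = ∑ k, (dz (e k) (dzbar (e k) ρ) (x - y)
      + dzbar (e k) (fun z => (φ z : ℂ)) y * dz (e k) ρ (x - y)) := by
  refine Finset.sum_congr rfl fun k _ => ?_
  have hdz : dz (e k) (fun y => ρ (x - y)) = fun y => -dz (e k) ρ (x - y) :=
    funext fun y => wirtinger_comp_const_sub (hρ.differentiable (by simp) _)
  rw [twistedDzbar, hdz, wirtinger_neg, wirtinger_comp_const_sub (by fun_prop),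
    wirtinger_comm (contDiff_infty.1 hρ 2).contDiffAt]
  ring

section Integral

variable [MeasurableSpace E] [BorelSpace E] (μ : Measure E) [μ.IsAddHaarMeasure]

lemma integrable_leviForm (hφ : ContDiff ℝ ∞ φ) (hg : ContDiff ℝ ∞ g) (hgc : HasCompactSupport g) :
    Integrable (fun x => leviForm φ e x (fun k => dz (e k) g x) * Complex.exp (-φ x)) μ := by
  simp only [leviForm, Finset.sum_mul]
  exact integrable_finsetSum _ fun j _ => integrable_finsetSum _ fun k _ =>
    integrable_weightedInner μ hφ.continuous (by fun_prop) (by fun_prop)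
      (hasCompactSupport_wirtinger hgc)

variable [FiniteDimensional ℂ E]

lemma weightedInner_twistedDzbar_left (hφ : ContDiff ℝ ∞ φ) (hh : ContDiff ℝ ∞ h)
    (hg : ContDiff ℝ ∞ g) (hc : HasCompactSupport h ∨ HasCompactSupport g) :
    weightedInner μ φ (twistedDzbar φ v h) g = -weightedInner μ φ h (dz v g) := by
  have hleft : weightedInner μ φ (twistedDzbar φ v h) g =
      ∫ x, dzbar v (fun y => h y * Complex.exp (-φ y)) x * conj (g x) ∂μ := by
    refine integral_congr_ae (ae_of_all _ fun x => ?_)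
    simp only [mul_right_comm _ (conj (g x))]
    rw [twistedDzbar_mul_cexp_neg (hφ.differentiable (by simp) x) (hh.differentiable (by simp) x)]
  have hc' : HasCompactSupport (fun y => h y * Complex.exp (-φ y)) ∨
      HasCompactSupport (fun y => conj (g y)) :=
    hc.imp (fun h => h.mul_right) (fun h => h.comp_left (g := conj) (map_zero _))
  have hhw : ContDiff ℝ ∞ (fun y => h y * Complex.exp (-φ y)) := by fun_prop
  rw [hleft, integral_wirtinger_mul μ (contDiff_infty.1 hhw 1)
    (contDiff_infty.1 (contDiff_conj_comp hg) 1) hc', weightedInner]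
  congr 2 with x
  rw [dzbar_conj (hg.differentiable (by simp) x)]
  ring

lemma weightedInner_twistedDzbar_right (hφ : ContDiff ℝ ∞ φ) (hh : ContDiff ℝ ∞ h)
    (hg : ContDiff ℝ ∞ g) (hc : HasCompactSupport h ∨ HasCompactSupport g) :
    weightedInner μ φ g (twistedDzbar φ v h) = -weightedInner μ φ (dz v g) h := by
  rw [← conj_weightedInner, weightedInner_twistedDzbar_left μ hφ hh hg hc, map_neg,
    conj_weightedInner]

lemma weightedInner_weightedLaplacian (hφ : ContDiff ℝ ∞ φ) (hf : ContDiff ℝ ∞ f)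
    (hg : ContDiff ℝ ∞ g) (hgc : HasCompactSupport g) :
    weightedInner μ φ f (weightedLaplacian φ e g) =
      -∑ k, weightedInner μ φ (dz (e k) f) (dz (e k) g) := by
  unfold weightedLaplacian
  rw [weightedInner_sum_right μ hφ.continuous hf.continuous (fun k => by fun_prop)
    fun k => hasCompactSupport_twistedDzbar (hasCompactSupport_wirtinger hgc),
    ← Finset.sum_neg_distrib]
  exact Finset.sum_congr rfl fun k _ => weightedInner_twistedDzbar_right μ hφ (by fun_prop) hf
    (.inl (hasCompactSupport_wirtinger hgc))

/- Bochner's formula: the commutator of `∂_{zⱼ}` with the adjoint of `∂_{zₖ}` produces the Levi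
form. -/
lemma weightedInner_weightedLaplacian_self (hφ : ContDiff ℝ ∞ φ) (hg : ContDiff ℝ ∞ g)
    (hgc : HasCompactSupport g) :
    weightedInner μ φ (weightedLaplacian φ e g) (weightedLaplacian φ e g) =
      (∑ j, ∑ k, weightedInner μ φ (dz (e j) (dz (e k) g)) (dz (e j) (dz (e k) g))) +
        ∫ x, leviForm φ e x (fun k => dz (e k) g x) * Complex.exp (-φ x) ∂μ := by
  have hdz (j : κ) : weightedInner μ φ (dz (e j) (weightedLaplacian φ e g)) (dz (e j) g) =
      -∑ k, (weightedInner μ φ (dz (e j) (dz (e k) g)) (dz (e j) (dz (e k) g)) +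
        weightedInner μ φ (fun x => dz (e j) (dzbar (e k) fun y => (φ y : ℂ)) x * dz (e k) g x)
          (dz (e j) g)) := by
    have hcs := hasCompactSupport_wirtinger (a := -Complex.I) (v := e j) hgc
    have hexp : dz (e j) (weightedLaplacian φ e g) = fun x =>
        ∑ k, (twistedDzbar φ (e k) (dz (e j) (dz (e k) g)) x
          - dz (e j) (dzbar (e k) fun y => (φ y : ℂ)) x * dz (e k) g x) :=
      funext fun x => dz_weightedLaplacian hφ hg
    rw [hexp, weightedInner_sum_left μ hφ.continuous (fun k => by fun_prop) (by fun_prop) hcs,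
      ← Finset.sum_neg_distrib]
    have hcomm (k : κ) : dz (e k) (dz (e j) g) = dz (e j) (dz (e k) g) :=
      funext fun x => wirtinger_comm (contDiff_infty.1 hg 2).contDiffAt
    refine Finset.sum_congr rfl fun k _ => ?_
    rw [weightedInner_sub_left μ hφ.continuous (by fun_prop) (by fun_prop) (by fun_prop) hcs,
      weightedInner_twistedDzbar_left μ hφ (by fun_prop) (by fun_prop) (.inr hcs), hcomm k]
    ring
  have hlevi : ∫ x, leviForm φ e x (fun k => dz (e k) g x) * Complex.exp (-φ x) ∂μ =
      ∑ j, ∑ k, weightedInner μ φ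
        (fun x => dz (e j) (dzbar (e k) fun y => (φ y : ℂ)) x * dz (e k) g x) (dz (e j) g) := by
    simp only [leviForm, Finset.sum_mul]
    have hint (j k : κ) := integrable_weightedInner μ hφ.continuous
      (f := fun x => dz (e j) (dzbar (e k) fun y => (φ y : ℂ)) x * dz (e k) g x) (g := dz (e j) g)
      (by fun_prop) (by fun_prop) (hasCompactSupport_wirtinger hgc)
    rw [integral_finsetSum _ fun j _ => integrable_finsetSum _ fun k _ => hint j k]
    exact Finset.sum_congr rfl fun j _ => integral_finsetSum _ fun k _ => hint j k
  rw [weightedInner_weightedLaplacian μ hφ (by fun_prop) hg hgc, hlevi]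
  simp only [hdz, Finset.sum_neg_distrib, neg_neg, Finset.sum_add_distrib]

lemma integral_re_leviForm_le (hφ : ContDiff ℝ ∞ φ) (hg : ContDiff ℝ ∞ g)
    (hgc : HasCompactSupport g) :
    ∫ x, (leviForm φ e x fun k => dz (e k) g x).re * Real.exp (-φ x) ∂μ ≤
      ∫ x, ‖weightedLaplacian φ e g x‖ ^ 2 * Real.exp (-φ x) ∂μ := by
  have hre : ∫ x, (leviForm φ e x fun k => dz (e k) g x).re * Real.exp (-φ x) ∂μ =
      (∫ x, leviForm φ e x (fun k => dz (e k) g x) * Complex.exp (-φ x) ∂μ).re := by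
    refine Eq.trans ?_ (integral_re (integrable_leviForm μ hφ hg hgc))
    simp only [← Complex.ofReal_neg, ← Complex.ofReal_exp, Complex.re_mul_ofReal,
      RCLike.re_to_complex]
  have hbochner := congrArg Complex.re (weightedInner_weightedLaplacian_self μ (e := e) hφ hg hgc)
  simp only [weightedInner_self, Complex.add_re, Complex.re_sum, Complex.ofReal_re, ← hre]
    at hbochner
  have hnonneg : 0 ≤ ∑ j, ∑ k, ∫ x, ‖dz (e j) (dz (e k) g) x‖ ^ 2 * Real.exp (-φ x) ∂μ :=
    Finset.sum_nonneg fun j _ => Finset.sum_nonneg fun k _ => integral_nonneg fun x => by positivity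
  linarith

lemma two_mul_re_weightedInner_weightedLaplacian_le {u : E → ℂ} {β : E → ℝ}
    (hφ : ContDiff ℝ ∞ φ) (hu : ContDiff ℝ ∞ u) (hg : ContDiff ℝ ∞ g) (hgc : HasCompactSupport g)
    (hβ : Integrable (fun x => β x * Real.exp (-φ x)) μ)
    (hlevi : ∀ x ξ, 2 * ‖∑ k, dz (e k) u x * conj (ξ k)‖ ≤ β x + (leviForm φ e x ξ).re) :
    2 * (weightedInner μ φ u (weightedLaplacian φ e g)).re ≤
      ∫ x, β x * Real.exp (-φ x) ∂μ
        + ∫ x, ‖weightedLaplacian φ e g x‖ ^ 2 * Real.exp (-φ x) ∂μ := by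
  set P : E → ℂ := fun x => ∑ k, dz (e k) u x * conj (dz (e k) g x) * Complex.exp (-φ x)
  have hterm (k : κ) := integrable_weightedInner μ hφ.continuous (f := dz (e k) u)
    (g := dz (e k) g) (by fun_prop) (by fun_prop) (hasCompactSupport_wirtinger hgc)
  have hP : Integrable P μ := integrable_finsetSum _ fun k _ => hterm k
  have hpair : (weightedInner μ φ u (weightedLaplacian φ e g)).re = -∫ x, (P x).re ∂μ := by
    rw [weightedInner_weightedLaplacian μ hφ hu hg hgc, Complex.neg_re]
    simp only [weightedInner]
    rw [← integral_finsetSum _ fun k _ => hterm k]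
    exact congrArg _ (integral_re hP).symm
  have hL : Integrable
      (fun x => (leviForm φ e x fun k => dz (e k) g x).re * Real.exp (-φ x)) μ := by
    refine (integrable_leviForm μ (e := e) hφ hg hgc).re.congr (ae_of_all _ fun x => ?_)
    simp only [← Complex.ofReal_neg, ← Complex.ofReal_exp, Complex.re_mul_ofReal,
      RCLike.re_to_complex]
  have hpt (x : E) : 2 * -(P x).re ≤ β x * Real.exp (-φ x)
      + (leviForm φ e x fun k => dz (e k) g x).re * Real.exp (-φ x) := by
    have hnorm : ‖P x‖ = ‖∑ k, dz (e k) u x * conj (dz (e k) g x)‖ * Real.exp (-φ x) := by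
      simp only [P]
      rw [← Finset.sum_mul, norm_mul, ← Complex.ofReal_neg, Complex.norm_exp_ofReal]
    have h := mul_le_mul_of_nonneg_right (hlevi x fun k => dz (e k) g x) (Real.exp_nonneg (-φ x))
    linarith [(neg_le_abs (P x).re).trans (Complex.abs_re_le_norm (P x))]
  calc 2 * (weightedInner μ φ u (weightedLaplacian φ e g)).re
      = ∫ x, 2 * -(P x).re ∂μ := by rw [hpair, integral_const_mul, integral_neg]
    _ ≤ ∫ x, (β x * Real.exp (-φ x)
          + (leviForm φ e x fun k => dz (e k) g x).re * Real.exp (-φ x)) ∂μ :=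
        integral_mono (hP.re.neg.const_mul 2) (hβ.add hL) hpt
    _ ≤ _ := by
        rw [integral_add hβ hL]
        exact add_le_add le_rfl (integral_re_leviForm_le μ hφ hg hgc)

end Integral

end WeightedLaplacian

section Convolution

variable {E : Type*} [NormedAddCommGroup E] [MeasurableSpace E] (μ : Measure E)

/-- Convolution of complex-valued functions with respect to `μ`. -/
def conv (V σ : E → ℂ) : E → ℂ :=
  convolution V σ (ContinuousLinearMap.mul ℝ ℂ) μ

lemma conv_apply (V σ : E → ℂ) (x : E) : conv μ V σ x = ∫ y, V y * σ (x - y) ∂μ := rfl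

variable {μ} [BorelSpace E] {V σ : E → ℂ} {x : E}

lemma integrable_mul_comp_const_sub [μ.IsAddLeftInvariant] (hV : LocallyIntegrable V μ)
    (hσ : Continuous σ) (hc : HasCompactSupport σ) :
    Integrable (fun y => V y * σ (x - y)) μ :=
  hc.convolutionExists_right (ContinuousLinearMap.mul ℝ ℂ) hV hσ x

variable [NormedSpace ℂ E]

lemma contDiff_conv (hV : LocallyIntegrable V μ) (hσ : ContDiff ℝ ∞ σ)
    (hc : HasCompactSupport σ) : ContDiff ℝ ∞ (conv μ V σ) :=
  hc.contDiff_convolution_right (ContinuousLinearMap.mul ℝ ℂ) hV hσ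

variable [FiniteDimensional ℂ E] [μ.IsAddHaarMeasure]

lemma wirtinger_conv {a : ℂ} {v : E} (hV : LocallyIntegrable V μ) (hσ : ContDiff ℝ 1 σ)
    (hc : HasCompactSupport σ) :
    wirtinger a v (conv μ V σ) x = conv μ V (wirtinger a v σ) x := by
  have hcont : Continuous (fderiv ℝ σ) := hσ.continuous_fderiv one_ne_zero
  have hderiv := hc.hasFDerivAt_convolution_right (ContinuousLinearMap.mul ℝ ℂ) hV hσ x
  have hexists := (hc.fderiv ℝ).convolutionExists_right
    ((ContinuousLinearMap.mul ℝ ℂ).precompR E) hV hcont x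
  have hfderiv (w : E) : fderiv ℝ (conv μ V σ) x w = ∫ y, V y * fderiv ℝ σ (x - y) w ∂μ := by
    have h : fderiv ℝ (conv μ V σ) x = _ := hderiv.fderiv
    rw [h, convolution_def, ContinuousLinearMap.integral_apply hexists.integrable]
    rfl
  have hint (w : E) : Integrable (fun y => V y * fderiv ℝ σ (x - y) w) μ :=
    integrable_mul_comp_const_sub (σ := fun z => fderiv ℝ σ z w) hV
      (hcont.clm_apply continuous_const) (hc.fderiv_apply ℝ w)
  rw [conv_apply, wirtinger, hfderiv, hfderiv, ← integral_const_mul,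
    ← integral_add (hint _) ((hint _).const_mul a), ← integral_div]
  congr with y
  rw [wirtinger]
  ring

lemma conv_assoc {f g k : E → ℂ} (hf : Continuous f) (hfc : HasCompactSupport f)
    (hg : LocallyIntegrable g μ) (hk : Continuous k) (hkc : HasCompactSupport k) :
    conv μ (conv μ f g) k x = conv μ f (conv μ g k) x := by
  have hgn : LocallyIntegrable (fun x => ‖g x‖) μ :=
    hg.mono hg.aestronglyMeasurable.norm (ae_of_all _ fun x => by simp)
  exact convolution_assoc _ _ _ _ (fun x y z => by simp [mul_assoc]) hf.aestronglyMeasurable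
    hg.aestronglyMeasurable hk.aestronglyMeasurable
    (ae_of_all _ (hfc.convolutionExists_left _ hf hg))
    (ae_of_all _ (hkc.norm.convolutionExists_right _ hgn hk.norm))
    (hfc.norm.convolutionExists_left _ hf.norm
      (hkc.norm.continuous_convolution_right _ hgn hk.norm).locallyIntegrable x)

end Convolution

lemma exists_contDiffBump_tendsto_rOut (E : Type*) [NormedAddCommGroup E] :
    ∃ b : ℕ → ContDiffBump (0 : E), Tendsto (fun m => (b m).rOut) atTop (𝓝 0) :=
  ⟨fun m => ⟨1 / (m + 1) / 2, 1 / (m + 1), by positivity, half_lt_self (by positivity)⟩,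
    tendsto_one_div_add_atTop_nhds_zero_nat⟩

section Mollifier

variable {E : Type*} [NormedAddCommGroup E] [NormedSpace ℂ E] [FiniteDimensional ℂ E]
  [MeasurableSpace E] (μ : Measure E)

/-- The normalized bump function `b`, as a complex-valued convolution kernel. -/
def mollifier (b : ContDiffBump (0 : E)) (x : E) : ℂ :=
  b.normed μ x

@[fun_prop]
lemma contDiff_mollifier (b : ContDiffBump (0 : E)) : ContDiff ℝ ∞ (mollifier μ b) :=
  Complex.ofRealCLM.contDiff.comp b.contDiff_normed

variable [BorelSpace E] [μ.IsAddHaarMeasure]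

lemma hasCompactSupport_mollifier (b : ContDiffBump (0 : E)) : HasCompactSupport (mollifier μ b) :=
  b.hasCompactSupport_normed.comp_left (g := ((↑) : ℝ → ℂ)) rfl

variable {μ}

lemma tendsto_integral_conv_mollifier_mul {ι : Type*} {l : Filter ι}
    {b : ι → ContDiffBump (0 : E)} (hb : Tendsto (fun i => (b i).rOut) l (𝓝 0)) {V ψ : E → ℂ}
    (hV : LocallyIntegrable V μ) (hψ : Continuous ψ) (hc : HasCompactSupport ψ) :
    Tendsto (fun i => ∫ x, conv μ V (mollifier μ (b i)) x * ψ x ∂μ) l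
      (𝓝 (∫ x, V x * ψ x ∂μ)) := by
  set ψ' : E → ℂ := fun x => ψ (-x)
  have hψ' : Continuous ψ' := hψ.comp continuous_neg
  have hc' : HasCompactSupport ψ' := hc.comp_homeomorph (Homeomorph.neg _)
  have hcont : Continuous (conv μ ψ' V) := hc'.continuous_convolution_left _ hψ' hV
  have eval_zero (W : E → ℂ) : conv μ ψ' W 0 = ∫ x, W x * ψ x ∂μ := by
    rw [conv_apply, ← integral_neg_eq_self]
    simp [ψ', mul_comm]
  rw [← eval_zero V]
  refine (ContDiffBump.convolution_tendsto_right_of_continuous (μ := μ) hb hcont 0).congr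
    fun i => ?_
  rw [← eval_zero, ← conv_assoc hψ' hc' hV (contDiff_mollifier μ (b i)).continuous
    (hasCompactSupport_mollifier μ (b i)), conv_apply, convolution_def, ← integral_neg_eq_self]
  simp [mollifier, mul_comm]

lemma sq_norm_integral_mul_le {X : Type*} [MeasurableSpace X] {ν : Measure X} {f : X → ℂ}
    {w : X → ℝ} (hw : ∀ x, 0 ≤ w x) (hw1 : ∫ x, w x ∂ν = 1)
    (hf : Integrable (fun x => ‖f x‖ ^ 2 * w x) ν) :
    ‖∫ x, f x * w x ∂ν‖ ^ 2 ≤ ∫ x, ‖f x‖ ^ 2 * w x ∂ν := by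
  by_cases hfw : Integrable (fun x => f x * w x) ν
  swap
  · rw [integral_undef hfw]
    simpa using integral_nonneg fun x => mul_nonneg (sq_nonneg ‖f x‖) (hw x)
  have hnorm (x : X) : ‖f x * w x‖ = ‖f x‖ * w x := by
    rw [norm_mul, Complex.norm_real, Real.norm_of_nonneg (hw x)]
  have hint : Integrable (fun x => ‖f x‖ * w x) ν := by simpa only [hnorm] using hfw.norm
  set c := ∫ x, ‖f x‖ * w x ∂ν with hc
  have hvar : ∫ x, (2 * c * (‖f x‖ * w x) - c ^ 2 * w x) ∂ν ≤ ∫ x, ‖f x‖ ^ 2 * w x ∂ν := by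
    refine integral_mono ((hint.const_mul _).sub ((integrable_of_integral_eq_one hw1).const_mul _))
      hf fun x => ?_
    have h := mul_nonneg (sq_nonneg (‖f x‖ - c)) (hw x)
    dsimp only
    linarith
  rw [integral_sub (hint.const_mul _) ((integrable_of_integral_eq_one hw1).const_mul _),
    integral_const_mul, integral_const_mul, hw1, ← hc] at hvar
  have hle : ‖∫ x, f x * w x ∂ν‖ ≤ c :=
    (norm_integral_le_integral_norm _).trans_eq (by simp only [hnorm, hc])
  nlinarith [norm_nonneg (∫ x, f x * w x ∂ν)]

lemma normed_const_sub_eq_zero {b : ContDiffBump (0 : E)} {x y : E} (h : ¬‖x - y‖ < b.rOut) :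
    b.normed μ (x - y) = 0 := by
  rw [← Function.notMem_support, b.support_normed_eq, mem_ball_zero_iff]
  exact h

/- Jensen's inequality for the probability density `b.normed μ (x - ·)`; the factor `2` is the price
for moving `e^φ` under the integral. -/
lemma exp_mul_sq_norm_integral_mul_mollifier_le {b : ContDiffBump (0 : E)} {V s : E → ℂ}
    {φ : E → ℝ} {x : E} {δ : ℝ} (hs : Continuous s)
    (hV : AEStronglyMeasurable V μ) (hQ : Integrable (fun y => Real.exp (φ y) * ‖V y‖ ^ 2) μ)
    (hosc : ∀ y, ‖x - y‖ < b.rOut → φ x ≤ φ y + Real.log 2)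
    (hδ : ∀ y, ‖x - y‖ < b.rOut → ‖s y‖ ≤ δ) :
    Real.exp (φ x) * ‖∫ y, V y * s y * mollifier μ b (x - y) ∂μ‖ ^ 2
      ≤ 2 * δ ^ 2 * ∫ y, Real.exp (φ y) * ‖V y‖ ^ 2 * b.normed μ (x - y) ∂μ := by
  have hle (y : E) : Real.exp (φ x) * (‖V y * s y‖ ^ 2 * b.normed μ (x - y)) ≤
      2 * δ ^ 2 * (Real.exp (φ y) * ‖V y‖ ^ 2 * b.normed μ (x - y)) := by
    by_cases hy : ‖x - y‖ < b.rOut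
    · have hexp : Real.exp (φ x) ≤ 2 * Real.exp (φ y) := by
        refine (Real.exp_le_exp.2 (hosc y hy)).trans_eq ?_
        rw [Real.exp_add, Real.exp_log two_pos, mul_comm]
      have hsδ : ‖s y‖ ^ 2 ≤ δ ^ 2 := pow_le_pow_left₀ (norm_nonneg _) (hδ y hy) 2
      have hb := b.nonneg_normed (μ := μ) (x - y)
      calc _ = Real.exp (φ x) * ‖s y‖ ^ 2 * (‖V y‖ ^ 2 * b.normed μ (x - y)) := by
            rw [norm_mul]; ring
        _ ≤ 2 * Real.exp (φ y) * δ ^ 2 * (‖V y‖ ^ 2 * b.normed μ (x - y)) := by gcongr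
        _ = _ := by ring
    · simp [normed_const_sub_eq_zero hy]
  have hbx : Continuous fun y => b.normed μ (x - y) := b.continuous_normed.comp (by fun_prop)
  have hdom : Integrable
      (fun y => 2 * δ ^ 2 * (Real.exp (φ y) * ‖V y‖ ^ 2 * b.normed μ (x - y))) μ :=
    Integrable.const_mul (b.hasCompactSupport_normed.convolutionExists_right
      (ContinuousLinearMap.mul ℝ ℝ) hQ.locallyIntegrable b.continuous_normed x) _
  have hint : Integrable
      (fun y => Real.exp (φ x) * (‖V y * s y‖ ^ 2 * b.normed μ (x - y))) μ := by
    refine hdom.mono' (((((hV.mul hs.aestronglyMeasurable).norm.pow 2).mul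
      hbx.aestronglyMeasurable).const_mul _)) (ae_of_all _ fun y => ?_)
    have hb := b.nonneg_normed (μ := μ) (x - y)
    rw [Real.norm_of_nonneg (by positivity)]
    exact hle y
  have hjensen := sq_norm_integral_mul_le (f := fun y => V y * s y)
    (fun y => b.nonneg_normed (μ := μ) (x - y))
    ((integral_sub_left_eq_self _ μ x).trans b.integral_normed)
    (by simpa using hint.const_mul (Real.exp (φ x))⁻¹)
  calc _ ≤ Real.exp (φ x) * ∫ y, ‖V y * s y‖ ^ 2 * b.normed μ (x - y) ∂μ :=
        mul_le_mul_of_nonneg_left hjensen (Real.exp_nonneg _)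
    _ ≤ ∫ y, 2 * δ ^ 2 * (Real.exp (φ y) * ‖V y‖ ^ 2 * b.normed μ (x - y)) ∂μ := by
        rw [← integral_const_mul]
        exact integral_mono hint hdom hle
    _ = _ := integral_const_mul _ _

end Mollifier

lemma exists_smooth_cutoff (E : Type*) [NormedAddCommGroup E] [NormedSpace ℝ E]
    [FiniteDimensional ℝ E] :
    ∃ C : ℝ, ∀ R : ℝ, 0 < R → ∃ χ : E → ℝ, ContDiff ℝ ∞ χ ∧ HasCompactSupport χ ∧
      (∀ x, 0 ≤ χ x) ∧ (∀ x, χ x ≤ 1) ∧ (∀ x, ‖x‖ ≤ R → χ x = 1) ∧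
      ∀ x, ‖fderiv ℝ χ x‖ ≤ C / R := by
  let b : ContDiffBump (0 : E) := ⟨1, 2, one_pos, one_lt_two⟩
  obtain ⟨C, hC⟩ := (b.hasCompactSupport.fderiv ℝ).exists_bound_of_continuous
    (b.contDiff.continuous_fderiv one_ne_zero)
  refine ⟨C, fun R hR => ⟨fun x => b (R⁻¹ • x), b.contDiff.comp (contDiff_const_smul _),
    b.hasCompactSupport.comp_smul (inv_ne_zero hR.ne'), fun x => b.nonneg, fun x => b.le_one,
    fun x hx => b.one_of_mem_closedBall ?_, fun x => ?_⟩⟩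
  · rw [mem_closedBall_zero_iff, norm_smul, Real.norm_of_nonneg (by positivity)]
    exact inv_mul_le_one_of_le₀ hx hR.le
  · rw [fderiv_comp_smul, norm_smul, Real.norm_of_nonneg (by positivity), div_eq_inv_mul]
    exact mul_le_mul_of_nonneg_left (hC _) (by positivity)

section Regularization

variable {E : Type*} [NormedAddCommGroup E] [NormedSpace ℂ E]

/- The difference of the two sides is `w ‖w⁻¹ χ D - χ r + 2 w⁻¹ conj ζ v‖²`. -/
lemma cutoff_sq_norm_le {w : ℝ} (hw : 0 < w) (χ : ℝ) (D r ζ v : ℂ) :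
    w⁻¹ * χ ^ 2 * ‖D‖ ^ 2 ≤
      2 * (((w : ℂ)⁻¹ * D - r) * (χ ^ 2 * conj D + 2 * χ * ζ * conj v)).re
        + w * χ ^ 2 * ‖r‖ ^ 2 + 4 * (w⁻¹ * ‖ζ‖ ^ 2 * ‖v‖ ^ 2) := by
  have hsq : 0 ≤ w * ‖(w : ℂ)⁻¹ * χ * D - χ * r + 2 * (w : ℂ)⁻¹ * conj ζ * v‖ ^ 2 := by positivity
  rw [← sub_nonneg]
  refine hsq.trans_eq ?_
  rw [← Complex.ofReal_inv]
  simp only [Complex.sq_norm, Complex.normSq_apply]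
  simp only [pow_two, Complex.add_re, Complex.add_im,
    Complex.sub_re, Complex.sub_im, Complex.mul_re, Complex.mul_im, Complex.conj_re,
    Complex.conj_im, Complex.ofReal_re, Complex.ofReal_im, Complex.re_ofNat, Complex.im_ofNat]
  field_simp
  ring

variable {κ : Type*}

/-- On balls of radius `r` about points of `K`, the function `φ` changes by at most `log 2` and its
derivatives `∂_{z̄ₖ} φ` by at most `δ`. -/
def SmallOscillation (φ : E → ℝ) (e : κ → E) (K : Set E) (r δ : ℝ) : Prop :=
  ∀ x ∈ K, ∀ y, ‖x - y‖ < r → φ x ≤ φ y + Real.log 2 ∧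
    ∀ k, ‖dzbar (e k) (fun z => (φ z : ℂ)) x - dzbar (e k) (fun z => (φ z : ℂ)) y‖ ≤ δ

lemma exists_smallOscillation [Finite κ] {φ : E → ℝ} {e : κ → E} {K : Set E} {δ : ℝ}
    (hφ : ContDiff ℝ ∞ φ) (hK : IsCompact K) (hδ : 0 < δ) :
    ∃ r > 0, SmallOscillation φ e K r δ := by
  have := Fintype.ofFinite κ
  have hcont : Continuous fun x => (φ x, fun k => dzbar (e k) (fun z => (φ z : ℂ)) x) :=
    hφ.continuous.prodMk (continuous_pi fun k => by fun_prop)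
  have hunif := hK.uniformContinuousAt_of_continuousAt _ (fun a _ => hcont.continuousAt)
    (Metric.dist_mem_uniformity (lt_min (Real.log_pos one_lt_two) hδ))
  obtain ⟨r, hr, hclose⟩ := Metric.mem_uniformity_dist.1 hunif
  refine ⟨r, hr, fun x hx y hy => ?_⟩
  obtain ⟨⟨hφ_lt, -⟩, -, hd_lt⟩ :
      (dist (φ x) (φ y) < Real.log 2 ∧ _) ∧ (_ ∧ _ < δ) := by
    simpa only [mem_ofPred_eq, Prod.dist_eq, lt_min_iff, max_lt_iff] using
      hclose (a := x) (b := y) (by rwa [dist_eq_norm]) hx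
  refine ⟨by linarith [(abs_lt.1 hφ_lt).2], fun k => ?_⟩
  simpa only [dist_eq_norm] using (dist_le_pi_dist _ _ k).trans hd_lt.le

lemma dz_sq_mul_conj {χ : E → ℝ} {U : E → ℂ} {v x : E} (hχ : DifferentiableAt ℝ χ x)
    (hU : DifferentiableAt ℝ U x) :
    dz v (fun y => (χ y : ℂ) ^ 2 * conj (U y)) x = (χ x : ℂ) ^ 2 * conj (dzbar v U x)
      + 2 * χ x * dz v (fun y => (χ y : ℂ)) x * conj (U x) := by
  have hχ' : DifferentiableAt ℝ (fun y => (χ y : ℂ)) x :=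
    Complex.ofRealCLM.differentiableAt.comp x hχ
  have hU' : DifferentiableAt ℝ (fun y => conj (U y)) x :=
    Complex.conjCLE.differentiableAt.comp x hU
  simp only [pow_two]
  rw [wirtinger_mul (hχ'.fun_mul hχ') hU', wirtinger_mul hχ' hχ', dz_conj hU]
  ring

variable [FiniteDimensional ℂ E] [MeasurableSpace E] (μ : Measure E)

lemma integral_sum_mul_wirtinger_eq_zero [BorelSpace E] [μ.IsAddHaarMeasure] [Fintype κ] {a : ℂ}
    {e : κ → E} {F : κ → E → ℂ} {T : E → ℂ} (hF : ∀ k, ContDiff ℝ ∞ (F k))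
    (hdiv : ∀ x, ∑ k, wirtinger a (e k) (F k) x = 0) (hT : ContDiff ℝ ∞ T)
    (hTc : HasCompactSupport T) :
    ∫ x, ∑ k, F k x * wirtinger a (e k) T x ∂μ = 0 := by
  have hint (k : κ) : Integrable (fun x => F k x * wirtinger a (e k) T x) μ :=
    Continuous.integrable_of_hasCompactSupport (by fun_prop)
      (hasCompactSupport_wirtinger hTc).mul_left
  have hint' (k : κ) : Integrable (fun x => wirtinger a (e k) (F k) x * T x) μ :=
    Continuous.integrable_of_hasCompactSupport (by fun_prop) hTc.mul_left
  have hparts (k : κ) : ∫ x, F k x * wirtinger a (e k) T x ∂μ =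
      -∫ x, wirtinger a (e k) (F k) x * T x ∂μ := by
    rw [integral_wirtinger_mul μ (contDiff_infty.1 (hF k) 1) (contDiff_infty.1 hT 1)
      (.inr hTc), neg_neg]
  rw [integral_finsetSum _ fun k _ => hint k]
  simp only [hparts, Finset.sum_neg_distrib]
  rw [← integral_finsetSum _ fun k _ => hint' k]
  simp only [← Finset.sum_mul, hdiv, zero_mul, integral_zero, neg_zero]

/-- `V` annihilates the range of the weighted Laplacian on smooth compactly supported functions:
in the sense of distributions, `∑ₖ ∂_{zₖ} (e^{-φ} ∂_{z̄ₖ} (e^φ V)) = 0`. -/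
def AnnihilatesLaplacian [Fintype κ] (φ : E → ℝ) (e : κ → E) (V : E → ℂ) : Prop :=
  ∀ g : E → ℂ, ContDiff ℝ ∞ g → HasCompactSupport g →
    ∫ x, V x * weightedLaplacian φ e g x ∂μ = 0

/-- The smooth approximation of `e^φ V` obtained by mollifying `V`. -/
def regularization (φ : E → ℝ) (V : E → ℂ) (b : ContDiffBump (0 : E)) (x : E) : ℂ :=
  Complex.exp (φ x) * conv μ V (mollifier μ b) x

/-- The mollification of the distribution `e^{-φ} ∂_{z̄} (e^φ V) = ∂_{z̄} V + ∂_{z̄} φ V`, where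
`∂_{z̄}` is the derivative in the direction `v`. -/
def flux (φ : E → ℝ) (V : E → ℂ) (b : ContDiffBump (0 : E)) (v x : E) : ℂ :=
  conv μ V (dzbar v (mollifier μ b)) x
    + conv μ (fun y => dzbar v (fun z => (φ z : ℂ)) y * V y) (mollifier μ b) x

/-- The commutator of mollification with multiplication by `∂_{z̄} φ`, applied to `V`. -/
def mollifierCommutator (φ : E → ℝ) (V : E → ℂ) (b : ContDiffBump (0 : E)) (v x : E) : ℂ :=
  ∫ y, V y * (dzbar v (fun z => (φ z : ℂ)) x - dzbar v (fun z => (φ z : ℂ)) y)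
    * mollifier μ b (x - y) ∂μ

/-- The mollification of the energy density `e^φ |V|²`. -/
def mollifiedEnergy (φ : E → ℝ) (V : E → ℂ) (b : ContDiffBump (0 : E)) (x : E) : ℝ :=
  ∫ y, Real.exp (φ y) * ‖V y‖ ^ 2 * b.normed μ (x - y) ∂μ

variable {μ} {φ : E → ℝ} {V : E → ℂ} {b : ContDiffBump (0 : E)} {e : κ → E} {v x : E}

lemma mollifiedEnergy_nonneg : 0 ≤ mollifiedEnergy μ φ V b x :=
  integral_nonneg fun _ => mul_nonneg (by positivity) (b.nonneg_normed _)

variable [BorelSpace E]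

lemma locallyIntegrable_dzbar_mul (hφ : ContDiff ℝ ∞ φ) (hV : LocallyIntegrable V μ) :
    LocallyIntegrable (fun y => dzbar v (fun z => (φ z : ℂ)) y * V y) μ := by
  have hcont : Continuous (dzbar v fun z => (φ z : ℂ)) := by fun_prop
  rw [← locallyIntegrableOn_univ] at hV ⊢
  exact hV.continuousOn_mul hcont.continuousOn isOpen_univ.isLocallyClosed

variable [μ.IsAddHaarMeasure]

lemma integrable_mollifiedEnergy (hQ : Integrable (fun x => Real.exp (φ x) * ‖V x‖ ^ 2) μ) :
    Integrable (mollifiedEnergy μ φ V b) μ :=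
  Integrable.integrable_convolution (ContinuousLinearMap.mul ℝ ℝ) hQ b.integrable_normed

lemma integral_mollifiedEnergy (hQ : Integrable (fun x => Real.exp (φ x) * ‖V x‖ ^ 2) μ) :
    ∫ x, mollifiedEnergy μ φ V b x ∂μ = ∫ x, Real.exp (φ x) * ‖V x‖ ^ 2 ∂μ := by
  have h := integral_convolution (ContinuousLinearMap.mul ℝ ℝ) hQ (b.integrable_normed (μ := μ))
  rw [b.integral_normed] at h
  simpa [convolution, mollifiedEnergy] using h

lemma contDiff_regularization (hφ : ContDiff ℝ ∞ φ) (hV : LocallyIntegrable V μ) :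
    ContDiff ℝ ∞ (regularization μ φ V b) := by
  have hconv := contDiff_conv hV (contDiff_mollifier μ b) (hasCompactSupport_mollifier μ b)
  unfold regularization
  fun_prop

lemma contDiff_flux (hφ : ContDiff ℝ ∞ φ) (hV : LocallyIntegrable V μ) :
    ContDiff ℝ ∞ (flux μ φ V b v) :=
  (contDiff_conv hV (by fun_prop)
      (hasCompactSupport_wirtinger (hasCompactSupport_mollifier μ b))).add
    (contDiff_conv (locallyIntegrable_dzbar_mul hφ hV) (contDiff_mollifier μ b)
      (hasCompactSupport_mollifier μ b))

lemma sum_dz_flux_eq_zero [Fintype κ] (hφ : ContDiff ℝ ∞ φ) (hV : LocallyIntegrable V μ)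
    (hL : AnnihilatesLaplacian μ φ e V) : ∑ k, dz (e k) (flux μ φ V b (e k)) x = 0 := by
  set ρ := mollifier μ b
  have hρ : ContDiff ℝ ∞ ρ := contDiff_mollifier μ b
  have hρc : HasCompactSupport ρ := hasCompactSupport_mollifier μ b
  have hdρc (k : κ) : HasCompactSupport (dzbar (e k) ρ) := hasCompactSupport_wirtinger hρc
  have hφV (k : κ) := locallyIntegrable_dzbar_mul (v := e k) hφ hV
  have hint₁ (k : κ) : Integrable (fun y => V y * dz (e k) (dzbar (e k) ρ) (x - y)) μ :=
    integrable_mul_comp_const_sub hV (by fun_prop) (hasCompactSupport_wirtinger (hdρc k))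
  have hint₂ (k : κ) : Integrable
      (fun y => dzbar (e k) (fun z => (φ z : ℂ)) y * V y * dz (e k) ρ (x - y)) μ :=
    integrable_mul_comp_const_sub (hφV k) (by fun_prop) (hasCompactSupport_wirtinger hρc)
  rw [← hL (fun y => ρ (x - y)) (by fun_prop) (hρc.comp_homeomorph (Homeomorph.subLeft x))]
  simp only [weightedLaplacian_comp_const_sub hρ, Finset.mul_sum, mul_add, ← mul_assoc,
    mul_comm (V _) (dzbar _ _ _)]
  have hint (k : κ) : Integrable (fun y => V y * dz (e k) (dzbar (e k) ρ) (x - y)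
      + dzbar (e k) (fun z => (φ z : ℂ)) y * V y * dz (e k) ρ (x - y)) μ :=
    (hint₁ k).add (hint₂ k)
  rw [integral_finsetSum _ fun k _ => hint k]
  refine Finset.sum_congr rfl fun k _ => ?_
  have hdiff₁ := (contDiff_conv hV (by fun_prop) (hdρc k)).differentiable (by simp) x
  have hdiff₂ := (contDiff_conv (hφV k) hρ hρc).differentiable (by simp) x
  unfold flux
  rw [integral_add (hint₁ k) (hint₂ k), wirtinger_add hdiff₁ hdiff₂,
    wirtinger_conv hV (contDiff_infty.1 (contDiff_wirtinger hρ) 1) (hdρc k),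
    wirtinger_conv (hφV k) (contDiff_infty.1 hρ 1) hρc]
  rfl

lemma flux_eq (hφ : ContDiff ℝ ∞ φ) (hV : LocallyIntegrable V μ) :
    flux μ φ V b v x = (Real.exp (φ x) : ℂ)⁻¹ * dzbar v (regularization μ φ V b) x
      - mollifierCommutator μ φ V b v x := by
  set ρ := mollifier μ b
  have hρ : ContDiff ℝ ∞ ρ := contDiff_mollifier μ b
  have hρc : HasCompactSupport ρ := hasCompactSupport_mollifier μ b
  have hφ' : DifferentiableAt ℝ (fun y => (φ y : ℂ)) x :=
    (contDiff_ofReal_comp hφ).differentiable (by simp) x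
  have hreg : dzbar v (regularization μ φ V b) x = Real.exp (φ x) *
      (dzbar v (fun z => (φ z : ℂ)) x * conv μ V ρ x + conv μ V (dzbar v ρ) x) := by
    unfold regularization
    rw [wirtinger_mul hφ'.cexp ((contDiff_conv hV hρ hρc).differentiable (by simp) x),
      wirtinger_cexp hφ', wirtinger_conv hV (contDiff_infty.1 hρ 1) hρc, Complex.ofReal_exp]
    ring
  have hcomm : mollifierCommutator μ φ V b v x = dzbar v (fun z => (φ z : ℂ)) x * conv μ V ρ x
      - conv μ (fun y => dzbar v (fun z => (φ z : ℂ)) y * V y) ρ x := by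
    rw [conv_apply, conv_apply, ← integral_const_mul, ← integral_sub
      ((integrable_mul_comp_const_sub hV hρ.continuous hρc).const_mul _)
      (integrable_mul_comp_const_sub (locallyIntegrable_dzbar_mul hφ hV) hρ.continuous hρc)]
    refine integral_congr_ae (ae_of_all _ fun y => ?_)
    dsimp only
    ring
  rw [hreg, hcomm, inv_mul_cancel_left₀ (by simp), flux]
  ring

lemma exp_mul_sq_norm_mollifierCommutator_le {K : Set E} {δ : ℝ} (hφ : ContDiff ℝ ∞ φ)
    (hV : LocallyIntegrable V μ) (hQ : Integrable (fun x => Real.exp (φ x) * ‖V x‖ ^ 2) μ)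
    (hK : SmallOscillation φ e K b.rOut δ) (hx : x ∈ K) (k : κ) :
    Real.exp (φ x) * ‖mollifierCommutator μ φ V b (e k) x‖ ^ 2
      ≤ 2 * δ ^ 2 * mollifiedEnergy μ φ V b x :=
  exp_mul_sq_norm_integral_mul_mollifier_le (by fun_prop) hV.aestronglyMeasurable hQ
    (fun y hy => (hK x hx y hy).1) fun y hy => (hK x hx y hy).2 k

lemma inv_exp_mul_sq_norm_regularization_le {K : Set E} {δ : ℝ} (hV : LocallyIntegrable V μ)
    (hQ : Integrable (fun x => Real.exp (φ x) * ‖V x‖ ^ 2) μ)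
    (hK : SmallOscillation φ e K b.rOut δ) (hx : x ∈ K) :
    (Real.exp (φ x))⁻¹ * ‖regularization μ φ V b x‖ ^ 2 ≤ 2 * mollifiedEnergy μ φ V b x := by
  have h := exp_mul_sq_norm_integral_mul_mollifier_le (s := fun _ => 1) (δ := 1)
    continuous_const hV.aestronglyMeasurable hQ (fun y hy => (hK x hx y hy).1) fun _ _ => by simp
  calc _ = Real.exp (φ x) * ‖∫ y, V y * 1 * mollifier μ b (x - y) ∂μ‖ ^ 2 := by
        rw [regularization, norm_mul, ← Complex.ofReal_exp, Complex.norm_real,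
          Real.norm_of_nonneg (Real.exp_nonneg _), mul_pow, conv_apply]
        simp only [mul_one]
        field_simp
    _ ≤ _ := h
    _ = _ := by rw [one_pow, mul_one]; rfl

lemma cutoff_energy_le {χ : E → ℝ} {δ γ : ℝ} (hφ : ContDiff ℝ ∞ φ) (hV : LocallyIntegrable V μ)
    (hQ : Integrable (fun x => Real.exp (φ x) * ‖V x‖ ^ 2) μ) (hχ : ContDiff ℝ ∞ χ)
    (hχ0 : ∀ x, 0 ≤ χ x) (hχ1 : ∀ x, χ x ≤ 1)
    (hγ : ∀ x k, ‖dz (e k) (fun y => (χ y : ℂ)) x‖ ≤ γ)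
    (hK : SmallOscillation φ e (tsupport χ) b.rOut δ) (x : E) (k : κ) :
    (Real.exp (φ x))⁻¹ * χ x ^ 2 * ‖dzbar (e k) (regularization μ φ V b) x‖ ^ 2 ≤
      2 * (flux μ φ V b (e k) x
        * dz (e k) (fun y => (χ y : ℂ) ^ 2 * conj (regularization μ φ V b y)) x).re
        + (2 * δ ^ 2 + 8 * γ ^ 2) * mollifiedEnergy μ φ V b x := by
  have hE : 0 ≤ mollifiedEnergy μ φ V b x := mollifiedEnergy_nonneg
  by_cases hx : x ∈ tsupport χ
  · have hpt := cutoff_sq_norm_le (Real.exp_pos (φ x)) (χ x)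
      (dzbar (e k) (regularization μ φ V b) x) (mollifierCommutator μ φ V b (e k) x)
      (dz (e k) (fun y => (χ y : ℂ)) x) (regularization μ φ V b x)
    rw [← flux_eq hφ hV, ← dz_sq_mul_conj (hχ.differentiable (by simp) x)
      ((contDiff_regularization hφ hV).differentiable (by simp) x)] at hpt
    have hcomm : Real.exp (φ x) * χ x ^ 2 * ‖mollifierCommutator μ φ V b (e k) x‖ ^ 2 ≤
        2 * δ ^ 2 * mollifiedEnergy μ φ V b x := by
      calc _ = χ x ^ 2 * (Real.exp (φ x) * ‖mollifierCommutator μ φ V b (e k) x‖ ^ 2) := by ring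
        _ ≤ 1 * (2 * δ ^ 2 * mollifiedEnergy μ φ V b x) :=
            mul_le_mul (pow_le_one₀ (hχ0 x) (hχ1 x))
              (exp_mul_sq_norm_mollifierCommutator_le hφ hV hQ hK hx k) (by positivity) zero_le_one
        _ = _ := one_mul _
    have hreg : (Real.exp (φ x))⁻¹ * ‖dz (e k) (fun y => (χ y : ℂ)) x‖ ^ 2
        * ‖regularization μ φ V b x‖ ^ 2 ≤ 2 * γ ^ 2 * mollifiedEnergy μ φ V b x := by
      calc _ = ‖dz (e k) (fun y => (χ y : ℂ)) x‖ ^ 2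
            * ((Real.exp (φ x))⁻¹ * ‖regularization μ φ V b x‖ ^ 2) := by ring
        _ ≤ γ ^ 2 * (2 * mollifiedEnergy μ φ V b x) :=
            mul_le_mul (pow_le_pow_left₀ (norm_nonneg _) (hγ x k) 2)
              (inv_exp_mul_sq_norm_regularization_le hV hQ hK hx) (by positivity) (by positivity)
        _ = _ := by ring
    linarith
  · have hT : x ∉ tsupport fun y => (χ y : ℂ) ^ 2 * conj (regularization μ φ V b y) :=
      fun h => hx (closure_mono (fun y hy => by contrapose! hy; simp_all) h)
    rw [image_eq_zero_of_notMem_tsupport hx, wirtinger_of_notMem_tsupport hT]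
    simp only [ne_eq, OfNat.ofNat_ne_zero, not_false_eq_true, zero_pow, mul_zero, zero_mul,
      Complex.zero_re, zero_add]
    positivity

lemma integrable_cutoff_energy {χ : E → ℝ} (hφ : ContDiff ℝ ∞ φ) (hV : LocallyIntegrable V μ)
    (hχ : Continuous χ) (hχc : HasCompactSupport χ) :
    Integrable (fun x => (Real.exp (φ x))⁻¹ * χ x ^ 2
      * ‖dzbar v (regularization μ φ V b) x‖ ^ 2) μ := by
  have hreg := contDiff_regularization (b := b) hφ hV
  simp only [← Real.exp_neg]
  exact Continuous.integrable_of_hasCompactSupport (by fun_prop)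
    ((hχc.comp_left (g := (· ^ 2)) (by simp)).mul_left.mul_right)

/- Caccioppoli's inequality: test the vanishing divergence of the flux against `χ² conj U`, where
`U` is the regularization. -/
lemma integral_cutoff_energy_le [Fintype κ] {χ : E → ℝ} {δ γ : ℝ} (hφ : ContDiff ℝ ∞ φ)
    (hV : LocallyIntegrable V μ) (hL : AnnihilatesLaplacian μ φ e V)
    (hQ : Integrable (fun x => Real.exp (φ x) * ‖V x‖ ^ 2) μ) (hχ : ContDiff ℝ ∞ χ)
    (hχc : HasCompactSupport χ) (hχ0 : ∀ x, 0 ≤ χ x) (hχ1 : ∀ x, χ x ≤ 1)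
    (hγ : ∀ x k, ‖dz (e k) (fun y => (χ y : ℂ)) x‖ ≤ γ)
    (hK : SmallOscillation φ e (tsupport χ) b.rOut δ) :
    ∫ x, ∑ k, (Real.exp (φ x))⁻¹ * χ x ^ 2 * ‖dzbar (e k) (regularization μ φ V b) x‖ ^ 2 ∂μ
      ≤ Fintype.card κ * (2 * δ ^ 2 + 8 * γ ^ 2) * ∫ x, Real.exp (φ x) * ‖V x‖ ^ 2 ∂μ := by
  set T : E → ℂ := fun y => (χ y : ℂ) ^ 2 * conj (regularization μ φ V b y)
  have hreg := contDiff_regularization (b := b) hφ hV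
  have hT : ContDiff ℝ ∞ T := by fun_prop
  have hTc : HasCompactSupport T :=
    (hχc.comp_left (g := fun t : ℝ => (t : ℂ) ^ 2) (by simp)).mul_right
  have hflux (k : κ) : ContDiff ℝ ∞ (flux μ φ V b (e k)) := contDiff_flux hφ hV
  have hpair : Integrable (fun x => ∑ k, flux μ φ V b (e k) x * dz (e k) T x) μ :=
    integrable_finsetSum _ fun k _ => Continuous.integrable_of_hasCompactSupport (by fun_prop)
      (hasCompactSupport_wirtinger hTc).mul_left
  have hre : Integrable (fun x => 2 * (∑ k, flux μ φ V b (e k) x * dz (e k) T x).re) μ :=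
    hpair.re.const_mul 2
  have hzero : ∫ x, (∑ k, flux μ φ V b (e k) x * dz (e k) T x).re ∂μ = 0 := by
    refine (integral_re hpair).trans ?_
    rw [integral_sum_mul_wirtinger_eq_zero μ hflux
      (fun x => sum_dz_flux_eq_zero hφ hV hL) hT hTc, map_zero]
  have hE := (integrable_mollifiedEnergy (b := b) hQ).const_mul
    (Fintype.card κ * (2 * δ ^ 2 + 8 * γ ^ 2))
  calc _ ≤ ∫ x, (2 * (∑ k, flux μ φ V b (e k) x * dz (e k) T x).re
          + Fintype.card κ * (2 * δ ^ 2 + 8 * γ ^ 2) * mollifiedEnergy μ φ V b x) ∂μ := by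
        refine integral_mono (integrable_finsetSum _ fun k _ =>
          integrable_cutoff_energy hφ hV hχ.continuous hχc) (hre.add hE)
          fun x => ?_
        refine (Finset.sum_le_sum fun k _ =>
          cutoff_energy_le hφ hV hQ hχ hχ0 hχ1 hγ hK x k).trans_eq ?_
        rw [Finset.sum_add_distrib, Complex.re_sum, Finset.mul_sum, Finset.sum_const,
          Finset.card_univ, nsmul_eq_mul, mul_assoc]
    _ = _ := by
        rw [integral_add hre hE, integral_const_mul, integral_const_mul, hzero,
          integral_mollifiedEnergy hQ, mul_zero, zero_add]

lemma norm_integral_mul_le_of_eq_one {X : Type*} [MeasurableSpace X] {ν : Measure X} {w χ : X → ℝ}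
    {F η : X → ℂ} {s : ℝ} (hs : 0 < s) (hw : ∀ x, 0 < w x) (hχ : ∀ x, η x ≠ 0 → χ x = 1)
    (hF : Integrable (fun x => (w x)⁻¹ * χ x ^ 2 * ‖F x‖ ^ 2) ν)
    (hη : Integrable (fun x => w x * ‖η x‖ ^ 2) ν) :
    ‖∫ x, F x * η x ∂ν‖ ≤
      s * ∫ x, (w x)⁻¹ * χ x ^ 2 * ‖F x‖ ^ 2 ∂ν + s⁻¹ * ∫ x, w x * ‖η x‖ ^ 2 ∂ν := by
  rw [← integral_const_mul, ← integral_const_mul,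
    ← integral_add (hF.const_mul s) (hη.const_mul s⁻¹)]
  refine norm_integral_le_of_norm_le ((hF.const_mul s).add (hη.const_mul s⁻¹))
    (ae_of_all _ fun x => ?_)
  have hwx := hw x
  by_cases hx : η x = 0
  · simp only [hx, mul_zero, norm_zero]
    positivity
  · have hAMGM : ‖F x‖ * ‖η x‖ = (s * w x)⁻¹ * (s * ‖F x‖ * (w x * ‖η x‖)) := by field_simp
    have hsum : s * ((w x)⁻¹ * χ x ^ 2 * ‖F x‖ ^ 2) + s⁻¹ * (w x * ‖η x‖ ^ 2) =
        (s * w x)⁻¹ * ((s * ‖F x‖) ^ 2 + (w x * ‖η x‖) ^ 2) := by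
      rw [hχ x hx]
      field_simp
    rw [norm_mul, hAMGM]
    refine (mul_le_mul_of_nonneg_left ?_ (by positivity)).trans_eq hsum.symm
    nlinarith [two_mul_le_add_sq (s * ‖F x‖) (w x * ‖η x‖), norm_nonneg (F x), norm_nonneg (η x)]

lemma integral_conv_mul_exp_mul_dzbar {η : E → ℂ} (hφ : ContDiff ℝ ∞ φ)
    (hV : LocallyIntegrable V μ) (hη : ContDiff ℝ ∞ η) (hηc : HasCompactSupport η) :
    ∫ x, conv μ V (mollifier μ b) x * (Complex.exp (φ x) * dzbar v η x) ∂μ =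
      -∫ x, dzbar v (regularization μ φ V b) x * η x ∂μ := by
  rw [integral_wirtinger_mul μ (contDiff_infty.1 (contDiff_regularization hφ hV) 1)
    (contDiff_infty.1 hη 1) (.inr hηc), neg_neg]
  refine integral_congr_ae (ae_of_all _ fun x => ?_)
  simp only [regularization]
  ring

lemma norm_integral_mul_exp_mul_dzbar_le [Fintype κ] {χ : E → ℝ} {η : E → ℂ} {δ γ s : ℝ}
    (hφ : ContDiff ℝ ∞ φ) (hV : LocallyIntegrable V μ) (hL : AnnihilatesLaplacian μ φ e V)
    (hQ : Integrable (fun x => Real.exp (φ x) * ‖V x‖ ^ 2) μ) (hχ : ContDiff ℝ ∞ χ)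
    (hχc : HasCompactSupport χ) (hχ0 : ∀ x, 0 ≤ χ x) (hχ1 : ∀ x, χ x ≤ 1)
    (hγ : ∀ x k, ‖dz (e k) (fun y => (χ y : ℂ)) x‖ ≤ γ) (hη : ContDiff ℝ ∞ η)
    (hηc : HasCompactSupport η) (hχη : ∀ x, η x ≠ 0 → χ x = 1) (hδ : 0 < δ) (hs : 0 < s) (k : κ) :
    ‖∫ x, V x * (Complex.exp (φ x) * dzbar (e k) η x) ∂μ‖ ≤
      s * (Fintype.card κ * (2 * δ ^ 2 + 8 * γ ^ 2) * ∫ x, Real.exp (φ x) * ‖V x‖ ^ 2 ∂μ)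
        + s⁻¹ * ∫ x, Real.exp (φ x) * ‖η x‖ ^ 2 ∂μ := by
  obtain ⟨r, hr, hosc⟩ := exists_smallOscillation (e := e) hφ hχc hδ
  obtain ⟨b, hb⟩ := exists_contDiffBump_tendsto_rOut E
  refine le_of_tendsto (tendsto_integral_conv_mollifier_mul hb hV
    (ψ := fun x => Complex.exp (φ x) * dzbar (e k) η x) (by fun_prop)
    (hasCompactSupport_wirtinger hηc).mul_left).norm ?_
  filter_upwards [hb.eventually_lt_const hr] with m hm
  have hterm (j : κ) := integrable_cutoff_energy (b := b m) (v := e j) hφ hV hχ.continuous hχc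
  have hηint : Integrable (fun x => Real.exp (φ x) * ‖η x‖ ^ 2) μ :=
    Continuous.integrable_of_hasCompactSupport (by fun_prop)
      ((hηc.comp_left (g := (‖·‖ ^ 2)) (by simp)).mul_left)
  have henergy := integral_cutoff_energy_le hφ hV hL hQ hχ hχc hχ0 hχ1 hγ
    fun x hx y hy => hosc x hx y (hy.trans hm)
  rw [integral_conv_mul_exp_mul_dzbar hφ hV hη hηc, norm_neg]
  refine (norm_integral_mul_le_of_eq_one hs (fun x => Real.exp_pos (φ x)) hχη (hterm k)
    hηint).trans (add_le_add (mul_le_mul_of_nonneg_left ?_ hs.le) le_rfl)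
  refine le_trans (integral_mono (hterm k) (integrable_finsetSum _ fun j _ => hterm j) fun x => ?_)
    henergy
  exact Finset.single_le_sum (f := fun j => (Real.exp (φ x))⁻¹ * χ x ^ 2
    * ‖dzbar (e j) (regularization μ φ V (b m)) x‖ ^ 2) (fun j _ => by positivity)
    (Finset.mem_univ k)

lemma integral_mul_exp_mul_dzbar_eq_zero [Fintype κ] {η : E → ℂ} (hφ : ContDiff ℝ ∞ φ)
    (hV : LocallyIntegrable V μ) (hL : AnnihilatesLaplacian μ φ e V)
    (hQ : Integrable (fun x => Real.exp (φ x) * ‖V x‖ ^ 2) μ) (hη : ContDiff ℝ ∞ η)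
    (hηc : HasCompactSupport η) (k : κ) :
    ∫ x, V x * (Complex.exp (φ x) * dzbar (e k) η x) ∂μ = 0 := by
  obtain ⟨C, hC⟩ := exists_smooth_cutoff E
  obtain ⟨M, hM⟩ := hηc.isBounded.exists_norm_le
  set N := ∫ x, Real.exp (φ x) * ‖η x‖ ^ 2 ∂μ
  set Q := ∫ x, Real.exp (φ x) * ‖V x‖ ^ 2 ∂μ
  set B := ∑ j, ‖e j‖
  have hbound : ∀ᶠ R in atTop, ‖∫ x, V x * (Complex.exp (φ x) * dzbar (e k) η x) ∂μ‖ ≤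
      (Fintype.card κ * (2 + 8 * (C * B) ^ 2) * Q + N) / R := by
    filter_upwards [eventually_ge_atTop M, eventually_gt_atTop 0] with R hMR hR
    obtain ⟨χ, hχ, hχc, hχ0, hχ1, hχR, hdχ⟩ := hC R hR
    have hγ (x : E) (j : κ) : ‖dz (e j) (fun y => (χ y : ℂ)) x‖ ≤ C / R * B := by
      refine (norm_wirtinger_ofReal_le (by simp) (hχ.differentiable (by simp) x)).trans ?_
      exact mul_le_mul (hdχ x) (Finset.single_le_sum (f := fun i => ‖e i‖)
        (fun i _ => norm_nonneg _) (Finset.mem_univ j)) (norm_nonneg _)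
        ((norm_nonneg _).trans (hdχ x))
    refine (norm_integral_mul_exp_mul_dzbar_le hφ hV hL hQ hχ hχc hχ0 hχ1 hγ hη hηc
      (fun x hx => hχR x ((hM x (subset_tsupport η hx)).trans hMR)) (one_div_pos.2 hR) hR
      k).trans_eq ?_
    field_simp
    rfl
  exact norm_le_zero_iff.1 (ge_of_tendsto (tendsto_const_nhds.div_atTop tendsto_id) hbound)

end Regularization

section CircleInvariant

variable {E F G : Type*} [NormedAddCommGroup E]

/-- The continuous radial cutoff equal to `1` on the ball of radius `R` and to `0` outside the ball
of radius `R + 1`. -/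
def radialCutoff (R : ℝ) (x : E) : ℝ :=
  max 0 (min 1 (R + 1 - ‖x‖))

@[fun_prop]
lemma continuous_radialCutoff (R : ℝ) : Continuous (radialCutoff R : E → ℝ) := by
  unfold radialCutoff
  fun_prop

lemma tendsto_integral_radialCutoff_mul [MeasurableSpace E] [OpensMeasurableSpace E]
    {μ : Measure E} {f : E → ℂ} (hf : Integrable f μ) :
    Tendsto (fun m : ℕ => ∫ x, radialCutoff m x * f x ∂μ) atTop (𝓝 (∫ x, f x ∂μ)) := by
  refine tendsto_integral_of_dominated_convergence (fun x => ‖f x‖) (fun m => ?_) hf.norm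
    (fun m => ae_of_all _ fun x => ?_) (ae_of_all _ fun x => ?_)
  · exact Continuous.aestronglyMeasurable (by fun_prop) |>.mul hf.aestronglyMeasurable
  · rw [norm_mul, Complex.norm_real, radialCutoff,
      Real.norm_of_nonneg (le_max_left _ _)]
    exact mul_le_of_le_one_left (norm_nonneg _) (max_le zero_le_one (min_le_left _ _))
  · refine tendsto_const_nhds.congr' ?_
    filter_upwards [eventually_ge_atTop ⌈‖x‖⌉₊] with m hm
    have hx : radialCutoff m x = 1 := by
      have := Nat.ceil_le.1 hm
      rw [radialCutoff, min_eq_left (by linarith), max_eq_right zero_le_one]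
    simp [hx]

variable [NormedSpace ℂ E]

/-- The function `f` is invariant under multiplication by complex numbers of modulus one. -/
def CircleInvariant (f : E → F) : Prop :=
  ∀ (c : ℂ) (x : E), ‖c‖ = 1 → f (c • x) = f x

lemma CircleInvariant.comp {f : E → F} (hf : CircleInvariant f) (g : F → G) :
    CircleInvariant fun x => g (f x) :=
  fun c x hc => congrArg g (hf c x hc)

lemma CircleInvariant.mul [Mul F] {f g : E → F} (hf : CircleInvariant f) (hg : CircleInvariant g) :
    CircleInvariant fun x => f x * g x :=
  fun c x hc => congrArg₂ (· * ·) (hf c x hc) (hg c x hc)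

lemma circleInvariant_norm : CircleInvariant fun x : E => ‖x‖ :=
  fun c x hc => by simp only [norm_smul, hc, one_mul]

lemma circleInvariant_radialCutoff (R : ℝ) : CircleInvariant (radialCutoff R : E → ℝ) :=
  circleInvariant_norm.comp fun t => max 0 (min 1 (R + 1 - t))

lemma circleAverage_comp_smul {h : E → ℂ} (hh : Differentiable ℂ h) (x : E) :
    Real.circleAverage (fun z => h (z • x)) 0 1 = h 0 := by
  have hx : Differentiable ℂ fun z : ℂ => h (z • x) := hh.comp (by fun_prop)
  rw [circleAverage_of_differentiable_on_off_countable countable_empty hx.continuous.continuousOn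
    fun z _ => hx z, zero_smul]

variable [FiniteDimensional ℂ E]

lemma hasCompactSupport_radialCutoff (R : ℝ) : HasCompactSupport (radialCutoff R : E → ℝ) := by
  refine HasCompactSupport.intro (isCompact_closedBall 0 (R + 1)) fun x hx => ?_
  rw [mem_closedBall_zero_iff, not_le] at hx
  exact max_eq_left (min_le_of_right_le (by linarith))

variable [MeasurableSpace E] [BorelSpace E] {μ : Measure E}
  [μ.IsAddHaarMeasure]

lemma measurePreserving_circle_smul {c : ℂ} (hc : ‖c‖ = 1) :
    MeasurePreserving (fun x : E => c • x) μ μ := by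
  have hc0 : c ≠ 0 := norm_ne_zero_iff.1 (hc ▸ one_ne_zero)
  let L : E ≃ₗ[ℝ] E := (LinearEquiv.smulOfNeZero ℂ E c hc0).restrictScalars ℝ
  have hL (s : Set E) := μ.addHaar_preimage_linearMap L.isUnit_det'.ne_zero s
  have hball : L ⁻¹' Metric.ball 0 1 = Metric.ball 0 1 := by
    ext x
    simp [L, norm_smul, hc]
  have hdet := hL (Metric.ball 0 1)
  rw [LinearEquiv.coe_coe, hball, eq_comm, ENNReal.mul_eq_right
    (Metric.measure_ball_pos μ 0 one_pos).ne' Metric.isBounded_ball.measure_lt_top.ne] at hdet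
  refine ⟨by fun_prop, Measure.ext fun s hs => ?_⟩
  rw [Measure.map_apply (by fun_prop) hs, ← one_mul (μ s), ← hdet]
  exact hL s

lemma integral_comp_circle_smul [NormedAddCommGroup F] [NormedSpace ℝ F] {c : ℂ} (hc : ‖c‖ = 1)
    (f : E → F) :
    ∫ x, f (c • x) ∂μ = ∫ x, f x ∂μ :=
  (measurePreserving_circle_smul hc).integral_comp
    (measurableEmbedding_const_smul₀ (norm_ne_zero_iff.1 (hc ▸ one_ne_zero))) f

lemma integral_circleAverage_smul {g : E → ℂ} (hg : Continuous g) (hgi : Integrable g μ) :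
    ∫ x, Real.circleAverage (fun z => g (z • x)) 0 1 ∂μ = ∫ x, g x ∂μ := by
  have hunit (t : ℝ) : ‖circleMap 0 1 t‖ = 1 := by simp
  have hcont : Continuous (Function.uncurry fun (t : ℝ) (x : E) => g (circleMap 0 1 t • x)) :=
    hg.comp (((continuous_circleMap 0 1).comp continuous_fst).smul continuous_snd)
  have hint : Integrable (Function.uncurry fun (t : ℝ) (x : E) => g (circleMap 0 1 t • x))
      ((volume.restrict (Ioc 0 (2 * Real.pi))).prod μ) := by
    refine (integrable_prod_iff hcont.aestronglyMeasurable).2 ⟨ae_of_all _ fun t =>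
      (measurePreserving_circle_smul (hunit t)).integrable_comp_of_integrable hgi, ?_⟩
    have hconst (t : ℝ) : ∫ x, ‖g (circleMap 0 1 t • x)‖ ∂μ = ∫ x, ‖g x‖ ∂μ :=
      integral_comp_circle_smul (hunit t) fun x => ‖g x‖
    simp only [Function.uncurry, hconst]
    exact integrable_const _
  simp only [Real.circleAverage_def, intervalIntegral.integral_of_le Real.two_pi_pos.le]
  rw [integral_smul, ← integral_integral_swap hint]
  simp only [integral_comp_circle_smul (hunit _)]
  simp [Real.two_pi_pos.le]
  field_simp

lemma integral_mul_eq_of_circleInvariant {h a : E → ℂ} (hh : Differentiable ℂ h)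
    (ha : Continuous a) (hac : HasCompactSupport a) (hai : CircleInvariant a) :
    ∫ x, h x * a x ∂μ = h 0 * ∫ x, a x ∂μ := by
  have hmean (x : E) :
      Real.circleAverage (fun z => h (z • x) * a (z • x)) 0 1 = h 0 * a x := by
    calc _ = Real.circleAverage (a x • fun z => h (z • x)) 0 1 :=
          Real.circleAverage_congr_sphere fun z hz => by
            simp [hai z x (by simpa using hz), mul_comm]
      _ = _ := by
        rw [Real.circleAverage_smul, circleAverage_comp_smul hh, smul_eq_mul, mul_comm]
  have hcont : Continuous fun x => h x * a x := hh.continuous.mul ha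
  rw [← integral_circleAverage_smul hcont (hcont.integrable_of_hasCompactSupport hac.mul_left),
    ← integral_const_mul]
  exact integral_congr_ae (ae_of_all _ hmean)

lemma differentiable_conv_mollifier {κ : Type*} {e : κ → E} {H : E → ℂ} {b : ContDiffBump (0 : E)}
    (he : ⊤ ≤ Submodule.span ℂ (range e)) (hH : LocallyIntegrable H μ)
    (hw : ∀ η, ContDiff ℝ ∞ η → HasCompactSupport η → ∀ k, ∫ x, H x * dzbar (e k) η x ∂μ = 0) :
    Differentiable ℂ (conv μ H (mollifier μ b)) := by
  have hρ := contDiff_mollifier μ b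
  have hρc := hasCompactSupport_mollifier μ b
  refine differentiable_of_dzbar_eq_zero he ((contDiff_conv hH hρ hρc).differentiable (by simp))
    fun k x => ?_
  have h := hw (fun y => mollifier μ b (x - y)) (by fun_prop)
    (hρc.comp_homeomorph (Homeomorph.subLeft x)) k
  simp only [wirtinger_comp_const_sub (hρ.differentiable (by simp) _), mul_neg, integral_neg,
    neg_eq_zero] at h
  rw [wirtinger_conv hH (contDiff_infty.1 hρ 1) hρc, conv_apply, h]

lemma integral_mul_integral_eq_of_circleInvariant {κ : Type*} {e : κ → E} {H a₁ a₂ : E → ℂ}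
    (he : ⊤ ≤ Submodule.span ℂ (range e)) (hH : LocallyIntegrable H μ)
    (hw : ∀ η, ContDiff ℝ ∞ η → HasCompactSupport η → ∀ k, ∫ x, H x * dzbar (e k) η x ∂μ = 0)
    (h₁ : Continuous a₁) (hc₁ : HasCompactSupport a₁) (hi₁ : CircleInvariant a₁)
    (h₂ : Continuous a₂) (hc₂ : HasCompactSupport a₂) (hi₂ : CircleInvariant a₂) :
    (∫ x, H x * a₂ x ∂μ) * ∫ x, a₁ x ∂μ = (∫ x, H x * a₁ x ∂μ) * ∫ x, a₂ x ∂μ := by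
  obtain ⟨b, hb⟩ := exists_contDiffBump_tendsto_rOut E
  refine tendsto_nhds_unique
    ((tendsto_integral_conv_mollifier_mul hb hH h₂ hc₂).mul_const (∫ x, a₁ x ∂μ)) ?_
  refine ((tendsto_integral_conv_mollifier_mul hb hH h₁ hc₁).mul_const (∫ x, a₂ x ∂μ)).congr
    fun m => ?_
  have hhol := differentiable_conv_mollifier (b := b m) he hH hw
  rw [integral_mul_eq_of_circleInvariant hhol h₁ hc₁ hi₁,
    integral_mul_eq_of_circleInvariant hhol h₂ hc₂ hi₂]
  ring

/- `e^φ V` is weakly holomorphic, so by the mean value property its integrals against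
circle-invariant functions are proportional to those of the constant function. -/
lemma integral_mul_integral_exp_neg_eq {κ : Type*} [Fintype κ] {e : κ → E} {φ : E → ℝ}
    {V u : E → ℂ} (he : ⊤ ≤ Submodule.span ℂ (range e)) (hφ : ContDiff ℝ ∞ φ)
    (hφi : CircleInvariant φ) (hu : Continuous u) (hui : CircleInvariant u)
    (hL : AnnihilatesLaplacian μ φ e V) (hQ : Integrable (fun x => Real.exp (φ x) * ‖V x‖ ^ 2) μ)
    (hV : Integrable V μ) (hVu : Integrable (fun x => V x * u x) μ)
    (hw : Integrable (fun x => Complex.exp (-φ x)) μ)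
    (huw : Integrable (fun x => u x * Complex.exp (-φ x)) μ) :
    (∫ x, V x * u x ∂μ) * ∫ x, Complex.exp (-φ x) ∂μ =
      (∫ x, V x ∂μ) * ∫ x, u x * Complex.exp (-φ x) ∂μ := by
  set H : E → ℂ := fun x => V x * Complex.exp (φ x)
  have hH : LocallyIntegrable H μ := by
    have hexp : Continuous fun x => Complex.exp (φ x) := by fun_prop
    have hloc := hV.locallyIntegrable
    rw [← locallyIntegrableOn_univ] at hloc ⊢
    exact hloc.mul_continuousOn hexp.continuousOn isOpen_univ.isLocallyClosed
  have hhol (η : E → ℂ) (hη : ContDiff ℝ ∞ η) (hηc : HasCompactSupport η) (k : κ) :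
      ∫ x, H x * dzbar (e k) η x ∂μ = 0 := by
    simpa only [H, mul_assoc] using
      integral_mul_exp_mul_dzbar_eq_zero hφ hV.locallyIntegrable hL hQ hη hηc k
  have hwi : CircleInvariant fun x => Complex.exp (-φ x) := hφi.comp fun t => Complex.exp (-t)
  have hcut (m : ℕ) : CircleInvariant fun x : E => (radialCutoff m x : ℂ) :=
    (circleInvariant_radialCutoff m).comp _
  have hcutc (m : ℕ) : HasCompactSupport fun x : E => (radialCutoff m x : ℂ) :=
    (hasCompactSupport_radialCutoff m).comp_left Complex.ofReal_zero
  have hexp (x : E) : Complex.exp (φ x) * Complex.exp (-φ x) = 1 := by simp [← Complex.exp_add]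
  refine tendsto_nhds_unique ((tendsto_integral_radialCutoff_mul hVu).mul
    (tendsto_integral_radialCutoff_mul hw)) (((tendsto_integral_radialCutoff_mul hV).mul
    (tendsto_integral_radialCutoff_mul huw)).congr fun m => ?_)
  have hprop := integral_mul_integral_eq_of_circleInvariant he hH hhol
    (a₁ := fun x => radialCutoff m x * Complex.exp (-φ x))
    (a₂ := fun x => radialCutoff m x * (u x * Complex.exp (-φ x)))
    (by fun_prop) (hcutc m).mul_right ((hcut m).mul hwi)
    (by fun_prop) (hcutc m).mul_right ((hcut m).mul (hui.mul hwi))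
  convert hprop.symm using 3
  · ext x
    linear_combination (-radialCutoff m x * V x) * hexp x
  · ext x
    linear_combination (-radialCutoff m x * V x * u x) * hexp x

end CircleInvariant

lemma norm_sq_le_of_mem_orthogonal_orthogonal {H : Type*} [NormedAddCommGroup H]
    [InnerProductSpace ℂ H] [CompleteSpace H] {S : Submodule ℂ H} {U : H} {M : ℝ} (hU : U ∈ Sᗮᗮ)
    (hS : ∀ s ∈ S, 2 * (inner ℂ s U).re ≤ M + ‖s‖ ^ 2) : ‖U‖ ^ 2 ≤ M := by
  rw [Submodule.orthogonal_orthogonal_eq_closure] at hU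
  have hclosed : IsClosed {s : H | 2 * (inner ℂ s U).re ≤ M + ‖s‖ ^ 2} :=
    isClosed_le (by fun_prop) (by fun_prop)
  have h : 2 * (inner ℂ U U).re ≤ M + ‖U‖ ^ 2 := closure_minimal hS hclosed hU
  have hself : (inner ℂ U U).re = ‖U‖ ^ 2 := inner_self_eq_norm_sq (𝕜 := ℂ) U
  linarith

section Variance

variable {E : Type*}

/-- The function `e^{-φ/2} f`; the map `f ↦ e^{-φ/2} f` is an isometry from `L²(e^{-φ} μ)` to
`L²(μ)`. -/
def halfDensity (φ : E → ℝ) (f : E → ℂ) (x : E) : ℂ :=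
  Real.exp (-φ x / 2) * f x

lemma norm_halfDensity_sq (φ : E → ℝ) (f : E → ℂ) (x : E) :
    ‖halfDensity φ f x‖ ^ 2 = ‖f x‖ ^ 2 * Real.exp (-φ x) := by
  rw [halfDensity, norm_mul, Complex.norm_real, Real.norm_of_nonneg (Real.exp_nonneg _), mul_pow,
    ← Real.exp_nat_mul, mul_comm]
  congr 2
  push_cast
  ring

lemma halfDensity_mul_halfDensity (φ : E → ℝ) (f g : E → ℂ) (x : E) :
    halfDensity φ f x * halfDensity φ g x = f x * g x * Complex.exp (-φ x) := by
  have hexp : Complex.exp (-φ x) = Real.exp (-φ x / 2) * Real.exp (-φ x / 2) := by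
    rw [← Complex.ofReal_mul, ← Real.exp_add, add_halves, Complex.ofReal_exp, Complex.ofReal_neg]
  rw [halfDensity, halfDensity, hexp]
  ring

variable [MeasurableSpace E] {μ : Measure E} {φ : E → ℝ} {f g : E → ℂ}

lemma inner_eq_weightedInner {F G : Lp ℂ 2 μ} (hF : F =ᵐ[μ] halfDensity φ f)
    (hG : G =ᵐ[μ] halfDensity φ g) : inner ℂ G F = weightedInner μ φ f g := by
  rw [L2.inner_def, weightedInner]
  refine integral_congr_ae ?_
  filter_upwards [hF, hG] with x hFx hGx
  have hconj : conj (halfDensity φ g x) = halfDensity φ (fun y => conj (g y)) x := by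
    simp only [halfDensity, map_mul, Complex.conj_ofReal]
  rw [hFx, hGx, RCLike.inner_apply, hconj,
    halfDensity_mul_halfDensity φ f (fun y => conj (g y))]

lemma norm_sq_eq_integral {F : Lp ℂ 2 μ} (hF : F =ᵐ[μ] halfDensity φ f) :
    ‖F‖ ^ 2 = ∫ x, ‖f x‖ ^ 2 * Real.exp (-φ x) ∂μ := by
  have h := inner_eq_weightedInner hF hF
  rw [inner_self_eq_norm_sq_to_K, weightedInner_self] at h
  exact Complex.ofReal_injective ((Complex.ofReal_pow _ _).trans h)

lemma integrable_exp_mul_norm_halfDensity_sq (φ : E → ℝ) (hf : MemLp f 2 μ) :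
    Integrable (fun x => Real.exp (φ x) * ‖halfDensity φ f x‖ ^ 2) μ := by
  refine ((memLp_two_iff_integrable_sq_norm hf.1).1 hf).congr (ae_of_all _ fun x => ?_)
  beta_reduce
  rw [norm_halfDensity_sq, mul_left_comm, ← Real.exp_add, add_neg_cancel, Real.exp_zero, mul_one]

variable [NormedAddCommGroup E] [BorelSpace E]

lemma memLp_halfDensity (hφ : Continuous φ) (hf : Continuous f)
    (hint : Integrable (fun x => ‖f x‖ ^ 2 * Real.exp (-φ x)) μ) :
    MemLp (halfDensity φ f) 2 μ := by
  have hcont : Continuous (halfDensity φ f) := by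
    unfold halfDensity
    fun_prop
  rw [memLp_two_iff_integrable_sq_norm hcont.aestronglyMeasurable]
  simpa only [norm_halfDensity_sq] using hint

variable [NormedSpace ℂ E] {κ : Type*} [Fintype κ]

variable (μ) in
/-- The image in `L²(μ)` of the range of the weighted Laplacian on smooth compactly supported
functions, under the isometry `halfDensity φ`. -/
def laplacianRange (φ : E → ℝ) (e : κ → E) : Submodule ℂ (Lp ℂ 2 μ) where
  carrier := {F | ∃ g, ContDiff ℝ ∞ g ∧ HasCompactSupport g ∧
    F =ᵐ[μ] halfDensity φ (weightedLaplacian φ e g)}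
  zero_mem' := by
    refine ⟨fun _ => 0, contDiff_const, HasCompactSupport.zero, ?_⟩
    filter_upwards [Lp.coeFn_zero ℂ 2 μ] with x hx
    have hzero : weightedLaplacian φ e (fun _ => (0 : ℂ)) x = 0 := by
      simpa using weightedLaplacian_const_mul (φ := φ) (e := e) (x := x) 0
        (contDiff_const (c := (0 : ℂ)))
    exact hx.trans (by simp [halfDensity, hzero])
  add_mem' := by
    rintro F F' ⟨g, hg, hgc, hF⟩ ⟨g', hg', hgc', hF'⟩
    refine ⟨fun x => g x + g' x, hg.add hg', hgc.add hgc', ?_⟩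
    filter_upwards [Lp.coeFn_add F F', hF, hF'] with x hx hFx hFx'
    rw [hx, Pi.add_apply, hFx, hFx', halfDensity, halfDensity, halfDensity,
      weightedLaplacian_add hg hg', mul_add]
  smul_mem' := by
    rintro c F ⟨g, hg, hgc, hF⟩
    refine ⟨fun x => c * g x, contDiff_const.mul hg, hgc.mul_left, ?_⟩
    filter_upwards [Lp.coeFn_smul c F, hF] with x hx hFx
    rw [hx, Pi.smul_apply, hFx, halfDensity, halfDensity, weightedLaplacian_const_mul c hg,
      smul_eq_mul, mul_left_comm]

variable [μ.IsAddHaarMeasure] {e : κ → E}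

lemma annihilatesLaplacian_of_mem_orthogonal {v : Lp ℂ 2 μ} (hφ : ContDiff ℝ ∞ φ)
    (hv : v ∈ (laplacianRange μ φ e)ᗮ) :
    AnnihilatesLaplacian μ φ e (halfDensity φ fun x => conj (v x)) := by
  intro g hg hgc
  have hΛ := contDiff_weightedLaplacian (e := e) hφ hg
  have hmem : MemLp (halfDensity φ (weightedLaplacian φ e g)) 2 μ := by
    refine memLp_halfDensity hφ.continuous hΛ.continuous
      (Continuous.integrable_of_hasCompactSupport (by fun_prop) ?_)
    exact ((hasCompactSupport_weightedLaplacian hgc).comp_left (g := (‖·‖ ^ 2))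
      (by simp)).mul_right
  rw [← (Submodule.mem_orthogonal' _ _).1 hv (hmem.toLp _) ⟨g, hg, hgc, hmem.coeFn_toLp⟩,
    L2.inner_def]
  refine integral_congr_ae ?_
  filter_upwards [hmem.coeFn_toLp] with x hx
  rw [hx, RCLike.inner_apply, halfDensity, halfDensity]
  ring

variable [FiniteDimensional ℂ E]

lemma toLp_halfDensity_mem_orthogonal_orthogonal {u : E → ℝ}
    (he : ⊤ ≤ Submodule.span ℂ (range e)) (hφ : ContDiff ℝ ∞ φ) (hφi : CircleInvariant φ)
    (hu : Continuous u) (hui : CircleInvariant u)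
    (hw : Integrable (fun x => Real.exp (-φ x)) μ)
    (hU : MemLp (halfDensity φ fun x => (u x : ℂ)) 2 μ)
    (hmean : ∫ x, u x * Real.exp (-φ x) ∂μ = 0) :
    hU.toLp ∈ (laplacianRange μ φ e)ᗮᗮ := by
  rw [Submodule.mem_orthogonal]
  intro v hv
  have hv2 : MemLp (fun x => conj (v x)) 2 μ := (Lp.memLp v).star
  have hone : MemLp (halfDensity φ fun _ => 1) 2 μ :=
    memLp_halfDensity hφ.continuous continuous_const (by simpa using hw)
  have hcast (x : E) : Complex.exp (-φ x) = (Real.exp (-φ x) : ℝ) := by simp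
  have hw' : Integrable (fun x => Complex.exp (-φ x)) μ := by
    simp only [hcast]
    exact hw.ofReal
  have huw : Integrable (fun x => u x * Complex.exp (-φ x)) μ :=
    (hU.integrable_mul hone).congr (ae_of_all _ fun x => by
      rw [Pi.mul_apply, halfDensity_mul_halfDensity, mul_one])
  have hmean' : ∫ x, u x * Complex.exp (-φ x) ∂μ = 0 := by
    simp only [hcast, ← Complex.ofReal_mul]
    rw [integral_complex_ofReal, hmean, Complex.ofReal_zero]
  have hmass : ∫ x, Complex.exp (-φ x) ∂μ ≠ 0 := by
    simp only [hcast]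
    rw [integral_complex_ofReal, Complex.ofReal_ne_zero]
    exact (integral_exp_pos hw).ne'
  have hV : Integrable (halfDensity φ fun x => conj (v x)) μ :=
    (hone.integrable_mul hv2).congr (ae_of_all _ fun x => by simp [halfDensity])
  have hVu : Integrable (fun x => halfDensity φ (fun y => conj (v y)) x * u x) μ :=
    (hU.integrable_mul hv2).congr (ae_of_all _ fun x => by
      simp only [Pi.mul_apply, halfDensity]
      ring)
  have horth := integral_mul_integral_exp_neg_eq he hφ hφi (u := fun x => (u x : ℂ)) (by fun_prop)
    (hui.comp _) (annihilatesLaplacian_of_mem_orthogonal hφ hv)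
    (integrable_exp_mul_norm_halfDensity_sq φ hv2) hV hVu hw' huw
  rw [hmean', mul_zero, mul_eq_zero, or_iff_left hmass] at horth
  rw [L2.inner_def, ← horth]
  refine integral_congr_ae ?_
  filter_upwards [hU.coeFn_toLp] with x hx
  rw [hx, RCLike.inner_apply, halfDensity, halfDensity, mul_right_comm]

lemma integral_sq_mul_exp_neg_le_of_leviForm {u β : E → ℝ}
    (he : ⊤ ≤ Submodule.span ℂ (range e)) (hφ : ContDiff ℝ ∞ φ) (hφi : CircleInvariant φ)
    (hu : ContDiff ℝ ∞ u) (hui : CircleInvariant u)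
    (hw : Integrable (fun x => Real.exp (-φ x)) μ)
    (hu2 : Integrable (fun x => u x ^ 2 * Real.exp (-φ x)) μ)
    (hβ : Integrable (fun x => β x * Real.exp (-φ x)) μ)
    (hmean : ∫ x, u x * Real.exp (-φ x) ∂μ = 0)
    (hlevi : ∀ x ξ, 2 * ‖∑ k, dz (e k) (fun y => (u y : ℂ)) x * conj (ξ k)‖ ≤
      β x + (leviForm φ e x ξ).re) :
    ∫ x, u x ^ 2 * Real.exp (-φ x) ∂μ ≤ ∫ x, β x * Real.exp (-φ x) ∂μ := by
  have hnorm (x : E) : ‖(u x : ℂ)‖ ^ 2 = u x ^ 2 := by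
    rw [Complex.norm_real, Real.norm_eq_abs, sq_abs]
  have hU : MemLp (halfDensity φ fun x => (u x : ℂ)) 2 μ :=
    memLp_halfDensity hφ.continuous (by fun_prop) (by simpa only [hnorm] using hu2)
  have hle := norm_sq_le_of_mem_orthogonal_orthogonal
    (M := ∫ x, β x * Real.exp (-φ x) ∂μ)
    (toLp_halfDensity_mem_orthogonal_orthogonal he hφ hφi hu.continuous hui hw hU hmean) ?_
  · rw [norm_sq_eq_integral hU.coeFn_toLp] at hle
    simpa only [hnorm] using hle
  · rintro s ⟨g, hg, hgc, hs⟩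
    rw [inner_eq_weightedInner hU.coeFn_toLp hs, norm_sq_eq_integral hs]
    exact two_mul_re_weightedInner_weightedLaplacian_le μ hφ (by fun_prop) hg hgc hβ hlevi

end Variance

section SumOfSquares

variable {E ι : Type*} [Fintype ι]

lemma ofReal_sum_mul_norm_sq (b : ι → ℝ) (F : ι → E → ℂ) (x : E) :
    ((∑ i, b i * ‖F i x‖ ^ 2 : ℝ) : ℂ) = ∑ i, b i * F i x * conj (F i x) := by
  simp [mul_assoc, Complex.mul_conj']

variable [NormedAddCommGroup E] [NormedSpace ℂ E] {F : ι → E → ℂ} {v w : E} {x : E}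

lemma wirtinger_sum_mul_conj {a : ℂ} {G : ι → E → ℂ} (hF : ∀ i, DifferentiableAt ℝ (F i) x)
    (hG : ∀ i, DifferentiableAt ℝ (G i) x) :
    wirtinger a v (fun y => ∑ i, F i y * conj (G i y)) x =
      ∑ i, (wirtinger a v (F i) x * conj (G i x) +
        F i x * conj (wirtinger (conj a) v (G i) x)) := by
  have hGc (i : ι) : DifferentiableAt ℝ (fun y => conj (G i y)) x := (hG i).star
  rw [wirtinger_sum fun i _ => (hF i).fun_mul (hGc i)]
  refine Finset.sum_congr rfl fun i _ => ?_
  rw [wirtinger_mul (hF i) (hGc i), wirtinger_conj (hG i)]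

lemma dz_sum_mul_norm_sq (b : ι → ℝ) (hF : ∀ i, DifferentiableAt ℂ (F i) x) :
    dz v (fun y => ((∑ i, b i * ‖F i y‖ ^ 2 : ℝ) : ℂ)) x =
      ∑ i, b i * dz v (F i) x * conj (F i x) := by
  have hFR (i : ι) : DifferentiableAt ℝ (F i) x := (hF i).restrictScalars ℝ
  simp only [ofReal_sum_mul_norm_sq]
  rw [wirtinger_sum_mul_conj (fun i => (hFR i).const_mul _) hFR]
  refine Finset.sum_congr rfl fun i _ => ?_
  rw [wirtinger_const_mul _ (hFR i), map_neg, Complex.conj_I, neg_neg, dzbar_eq_zero (hF i),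
    map_zero, mul_zero, add_zero]

lemma dzbar_sum_norm_sq (hF : ∀ i, DifferentiableAt ℂ (F i) x) :
    dzbar v (fun y => ((∑ i, ‖F i y‖ ^ 2 : ℝ) : ℂ)) x = ∑ i, F i x * conj (dz v (F i) x) := by
  have hFR (i : ι) : DifferentiableAt ℝ (F i) x := (hF i).restrictScalars ℝ
  have hsum (y : E) : ((∑ i, ‖F i y‖ ^ 2 : ℝ) : ℂ) = ∑ i, F i y * conj (F i y) := by
    simp [Complex.mul_conj']
  simp only [hsum]
  rw [wirtinger_sum_mul_conj hFR hFR]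
  refine Finset.sum_congr rfl fun i _ => ?_
  rw [dzbar_eq_zero (hF i), Complex.conj_I, zero_mul, zero_add]

lemma dz_dzbar_sum_norm_sq (hF : ∀ i, ContDiff ℂ ∞ (F i)) :
    dz v (dzbar w fun y => ((∑ i, ‖F i y‖ ^ 2 : ℝ) : ℂ)) x =
      ∑ i, dz v (F i) x * conj (dz w (F i) x) := by
  have hFR (i : ι) : ContDiff ℝ ∞ (F i) := (hF i).restrict_scalars ℝ
  have hd (i : ι) (y : E) : DifferentiableAt ℂ (F i) y := (hF i).differentiable (by simp) y
  have hbar (i : ι) : dzbar v (F i) = fun _ => 0 := funext fun y => dzbar_eq_zero (hd i y)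
  have hfun : (dzbar w fun y => ((∑ i, ‖F i y‖ ^ 2 : ℝ) : ℂ)) =
      fun y => ∑ i, F i y * conj (dz w (F i) y) :=
    funext fun y => dzbar_sum_norm_sq fun i => hd i y
  have hdz (i : ι) : DifferentiableAt ℝ (dz w (F i)) x := differentiableAt_wirtinger (hFR i)
  rw [hfun, wirtinger_sum_mul_conj (fun i => (hd i x).restrictScalars ℝ) hdz]
  refine Finset.sum_congr rfl fun i _ => ?_
  have hcomm : dzbar v (dz w (F i)) x = 0 := by
    rw [wirtinger_comm (contDiff_infty.1 (hFR i) 2).contDiffAt, hbar, wirtinger_const]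
  rw [map_neg, Complex.conj_I, neg_neg, hcomm, map_zero, mul_zero, add_zero]

variable {κ : Type*} [Fintype κ] {e : κ → E}

lemma leviForm_sum_norm_sq (hF : ∀ i, ContDiff ℂ ∞ (F i)) (ξ : κ → ℂ) :
    leviForm (fun y => ∑ i, ‖F i y‖ ^ 2) e x ξ =
      ((∑ i, ‖∑ k, dz (e k) (F i) x * conj (ξ k)‖ ^ 2 : ℝ) : ℂ) := by
  have hterm (i : ι) : ((‖∑ k, dz (e k) (F i) x * conj (ξ k)‖ ^ 2 : ℝ) : ℂ) =
      ∑ j, ∑ k, dz (e j) (F i) x * conj (dz (e k) (F i) x) * ξ k * conj (ξ j) := by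
    rw [Complex.ofReal_pow, ← Complex.mul_conj', map_sum, Finset.sum_mul_sum]
    refine Finset.sum_congr rfl fun j _ => Finset.sum_congr rfl fun k _ => ?_
    rw [map_mul, Complex.conj_conj]
    ring
  rw [Complex.ofReal_sum, Finset.sum_congr rfl fun i _ => hterm i, Finset.sum_comm]
  refine Finset.sum_congr rfl fun j _ => ?_
  rw [Finset.sum_comm]
  refine Finset.sum_congr rfl fun k _ => ?_
  rw [dz_dzbar_sum_norm_sq hF, Finset.sum_mul, Finset.sum_mul]

lemma two_mul_norm_dz_sum_le (b : ι → ℝ) (m : ℝ) (hF : ∀ i, ContDiff ℂ ∞ (F i)) (ξ : κ → ℂ) :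
    2 * ‖∑ k, dz (e k) (fun y => ((∑ i, b i * ‖F i y‖ ^ 2 - m : ℝ) : ℂ)) x * conj (ξ k)‖ ≤
      ∑ i, b i ^ 2 * ‖F i x‖ ^ 2 + (leviForm (fun y => ∑ i, ‖F i y‖ ^ 2) e x ξ).re := by
  have hFR (i : ι) : ContDiff ℝ ∞ (F i) := (hF i).restrict_scalars ℝ
  have hdz (k : κ) : dz (e k) (fun y => ((∑ i, b i * ‖F i y‖ ^ 2 - m : ℝ) : ℂ)) x =
      ∑ i, b i * dz (e k) (F i) x * conj (F i x) := by
    have hsmooth : ContDiff ℝ ∞ fun y => ((∑ i, b i * ‖F i y‖ ^ 2 : ℝ) : ℂ) := by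
      simp only [ofReal_sum_mul_norm_sq]
      fun_prop
    simp only [Complex.ofReal_sub]
    rw [wirtinger_sub (hsmooth.differentiable (by simp) x) (by fun_prop), wirtinger_const,
      sub_zero, dz_sum_mul_norm_sq b fun i => (hF i).differentiable (by simp) x]
  have hsum : ∑ k, dz (e k) (fun y => ((∑ i, b i * ‖F i y‖ ^ 2 - m : ℝ) : ℂ)) x * conj (ξ k) =
      ∑ i, b i * conj (F i x) * ∑ k, dz (e k) (F i) x * conj (ξ k) := by
    simp only [hdz, Finset.sum_mul, Finset.mul_sum]
    rw [Finset.sum_comm]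
    refine Finset.sum_congr rfl fun i _ => Finset.sum_congr rfl fun k _ => by ring
  rw [hsum, leviForm_sum_norm_sq hF, Complex.ofReal_re, ← Finset.sum_add_distrib]
  refine (mul_le_mul_of_nonneg_left (norm_sum_le _ _) zero_le_two).trans ?_
  rw [Finset.mul_sum]
  refine Finset.sum_le_sum fun i _ => ?_
  simp only [norm_mul, RCLike.norm_conj, Complex.norm_real, Real.norm_eq_abs]
  rw [← sq_abs (b i), ← mul_pow, ← mul_assoc]
  exact two_mul_le_add_sq _ _

variable [FiniteDimensional ℂ E] [MeasurableSpace E] [BorelSpace E]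
  {μ : Measure E} [μ.IsAddHaarMeasure]

lemma integral_sub_sq_mul_exp_neg_sum_norm_sq_le (b : ι → ℝ) (m : ℝ)
    (hF : ∀ i, ContDiff ℂ ∞ (F i)) (hFi : ∀ i, CircleInvariant fun x => ‖F i x‖)
    (h0 : Integrable (fun x => Real.exp (-∑ i, ‖F i x‖ ^ 2)) μ)
    (h1 : Integrable (fun x => (∑ i, b i * ‖F i x‖ ^ 2 - m) ^ 2 *
      Real.exp (-∑ i, ‖F i x‖ ^ 2)) μ)
    (h2 : Integrable (fun x => (∑ i, b i ^ 2 * ‖F i x‖ ^ 2) * Real.exp (-∑ i, ‖F i x‖ ^ 2)) μ)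
    (hmean : ∫ x, (∑ i, b i * ‖F i x‖ ^ 2 - m) * Real.exp (-∑ i, ‖F i x‖ ^ 2) ∂μ = 0) :
    ∫ x, (∑ i, b i * ‖F i x‖ ^ 2 - m) ^ 2 * Real.exp (-∑ i, ‖F i x‖ ^ 2) ∂μ ≤
      ∫ x, (∑ i, b i ^ 2 * ‖F i x‖ ^ 2) * Real.exp (-∑ i, ‖F i x‖ ^ 2) ∂μ := by
  have hFR (i : ι) : ContDiff ℝ ∞ fun x => ‖F i x‖ ^ 2 := ((hF i).restrict_scalars ℝ).norm_sq ℝ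
  refine integral_sq_mul_exp_neg_le_of_leviForm (φ := fun x => ∑ i, ‖F i x‖ ^ 2)
    (u := fun x => ∑ i, b i * ‖F i x‖ ^ 2 - m) (Module.finBasis ℂ E).span_eq.ge (by fun_prop) ?_
    (by fun_prop) ?_ h0 h1 h2 hmean fun x => two_mul_norm_dz_sum_le b m hF
  · exact fun c x hc => by simp only [hFi _ c x hc]
  · exact fun c x hc => by simp only [hFi _ c x hc]

end SumOfSquares

section LogConcave

lemma concaveOn_log_of_mul_le_sq {f f' f'' : ℝ → ℝ} (hf : ∀ t, 0 < f t)
    (hf' : ∀ t, HasDerivAt f (f' t) t) (hf'' : ∀ t, HasDerivAt f' (f'' t) t)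
    (h : ∀ t, f'' t * f t ≤ f' t ^ 2) : ConcaveOn ℝ univ fun t => Real.log (f t) := by
  have hlog (t : ℝ) : HasDerivAt (fun t => Real.log (f t)) (f' t / f t) t :=
    (hf' t).log (hf t).ne'
  have hquot (t : ℝ) :
      HasDerivAt (fun t => f' t / f t) ((f'' t * f t - f' t * f' t) / f t ^ 2) t :=
    (hf'' t).fun_div (hf' t) (hf t).ne'
  have hderiv : deriv (fun t => Real.log (f t)) = fun t => f' t / f t :=
    funext fun t => (hlog t).deriv
  refine concaveOn_univ_of_deriv2_nonpos (fun t => (hlog t).differentiableAt) ?_ fun t => ?_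
  · exact hderiv ▸ fun t => (hquot t).differentiableAt
  · rw [Function.iterate_succ, Function.iterate_one, Function.comp, hderiv, (hquot t).deriv]
    refine div_nonpos_of_nonpos_of_nonneg ?_ (sq_nonneg _)
    linarith [h t]

variable {X : Type*} [MeasurableSpace X] {μ : Measure X}

lemma sub_mul_integral_le_sq {u w : X → ℝ} {B : ℝ} (hw : Integrable w μ)
    (huw : Integrable (fun x => u x * w x) μ) (huw2 : Integrable (fun x => u x ^ 2 * w x) μ)
    (hpos : 0 < ∫ x, w x ∂μ)
    (hvar : ∀ m, ∫ x, (u x - m) * w x ∂μ = 0 → ∫ x, (u x - m) ^ 2 * w x ∂μ ≤ B) :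
    (∫ x, u x ^ 2 * w x ∂μ - B) * ∫ x, w x ∂μ ≤ (∫ x, u x * w x ∂μ) ^ 2 := by
  set m := (∫ x, u x * w x ∂μ) / ∫ x, w x ∂μ with hm
  have huw_eq : ∫ x, u x * w x ∂μ = m * ∫ x, w x ∂μ := by rw [hm, div_mul_cancel₀ _ hpos.ne']
  have hmean : ∫ x, (u x - m) * w x ∂μ = 0 := by
    simp only [sub_mul]
    rw [integral_sub huw (hw.const_mul m), integral_const_mul, huw_eq, sub_self]
  have hexpand : ∫ x, (u x - m) ^ 2 * w x ∂μ = ∫ x, u x ^ 2 * w x ∂μ - m ^ 2 * ∫ x, w x ∂μ := by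
    have hpoint (x : X) : (u x - m) ^ 2 * w x =
        u x ^ 2 * w x - m ^ 2 * w x - 2 * m * ((u x - m) * w x) := by ring
    have hcent : Integrable (fun x => (u x - m) * w x) μ := by
      simp only [sub_mul]
      exact huw.sub (hw.const_mul m)
    have hdiff : Integrable (fun x => u x ^ 2 * w x - m ^ 2 * w x) μ :=
      huw2.sub (hw.const_mul _)
    simp only [hpoint]
    rw [integral_sub hdiff (hcent.const_mul _),
      integral_sub huw2 (hw.const_mul _), integral_const_mul, integral_const_mul, hmean, mul_zero,
      sub_zero]
  have hle := mul_le_mul_of_nonneg_right (hvar m hmean) hpos.le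
  rw [hexpand] at hle
  rw [huw_eq]
  linarith

lemma integrable_pow_mul_exp_neg {S : X → ℝ} (hS : AEStronglyMeasurable S μ)
    (hS0 : ∀ x, 0 ≤ S x) (hint : ∀ c : ℝ, 0 < c → Integrable (fun x => Real.exp (-(c * S x))) μ)
    {c : ℝ} (hc : 0 < c) (n : ℕ) : Integrable (fun x => S x ^ n * Real.exp (-(c * S x))) μ := by
  refine ((hint (c / 2) (half_pos hc)).const_mul (n.factorial * (2 / c) ^ n)).mono'
    ((hS.pow n).mul (hint c hc).1) (ae_of_all _ fun x => ?_)
  have hpow : S x ^ n ≤ n.factorial * (2 / c) ^ n * Real.exp (c / 2 * S x) := by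
    have h := Real.pow_div_factorial_le_exp (c / 2 * S x) (mul_nonneg (half_pos hc).le (hS0 x)) n
    rw [div_le_iff₀ (by positivity), mul_pow] at h
    calc S x ^ n = (2 / c) ^ n * ((c / 2) ^ n * S x ^ n) := by
          rw [← mul_assoc, ← mul_pow, div_mul_div_cancel₀ hc.ne', div_self two_ne_zero, one_pow,
            one_mul]
      _ ≤ (2 / c) ^ n * (Real.exp (c / 2 * S x) * n.factorial) := by gcongr
      _ = n.factorial * (2 / c) ^ n * Real.exp (c / 2 * S x) := by ring
  rw [Real.norm_of_nonneg (mul_nonneg (pow_nonneg (hS0 x) n) (Real.exp_nonneg _))]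
  calc S x ^ n * Real.exp (-(c * S x))
      ≤ n.factorial * (2 / c) ^ n * Real.exp (c / 2 * S x) * Real.exp (-(c * S x)) := by gcongr
    _ = n.factorial * (2 / c) ^ n * Real.exp (-(c / 2 * S x)) := by
      rw [mul_assoc, ← Real.exp_add]
      ring_nf

end LogConcave

section ExpSum

variable {X ι : Type*} [Fintype ι]

/-- The `k`-th derivative in `t` of the sum `∑ i, exp (b i * t) * a i x`. -/
def expSum (b : ι → ℝ) (a : ι → X → ℝ) (k : ℕ) (t : ℝ) (x : X) : ℝ :=
  ∑ i, b i ^ k * (Real.exp (b i * t) * a i x)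

lemma hasDerivAt_expSum (b : ι → ℝ) (a : ι → X → ℝ) (k : ℕ) (t : ℝ) (x : X) :
    HasDerivAt (fun s => expSum b a k s x) (expSum b a (k + 1) t x) t := by
  refine HasDerivAt.fun_sum fun i _ => ?_
  refine (((((hasDerivAt_id t).const_mul (b i)).exp).mul_const (a i x)).const_mul
    (b i ^ k)).congr_deriv ?_
  simp only [id]
  ring

lemma exists_mul_sum_le_expSum_zero (b : ι → ℝ) {a : ι → X → ℝ} (ha0 : ∀ i x, 0 ≤ a i x) (t : ℝ) :
    ∃ c, 0 < c ∧ ∀ s ∈ Metric.ball t 1, ∀ x, c * ∑ i, a i x ≤ expSum b a 0 s x := by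
  obtain ⟨M, hM⟩ := (isCompact_closedBall t 1).exists_bound_of_continuousOn
    (f := fun s i => b i * s) (by fun_prop)
  refine ⟨Real.exp (-M), Real.exp_pos _, fun s hs x => ?_⟩
  rw [expSum, Finset.mul_sum]
  refine Finset.sum_le_sum fun i _ => ?_
  rw [pow_zero, one_mul]
  have hle : |b i * s| ≤ M :=
    (norm_le_pi_norm (fun i => b i * s) i).trans (hM s (Metric.ball_subset_closedBall hs))
  exact mul_le_mul_of_nonneg_right (Real.exp_le_exp.2 (neg_le_of_abs_le hle)) (ha0 i x)

lemma exists_abs_expSum_le (b : ι → ℝ) {a : ι → X → ℝ} (ha0 : ∀ i x, 0 ≤ a i x) (k : ℕ) (t : ℝ) :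
    ∃ D, ∀ s ∈ Metric.ball t 1, ∀ x, |expSum b a k s x| ≤ D * ∑ i, a i x := by
  obtain ⟨D, hD⟩ := (isCompact_closedBall t 1).exists_bound_of_continuousOn
    (f := fun s i => b i ^ k * Real.exp (b i * s)) (by fun_prop)
  refine ⟨D, fun s hs x => ?_⟩
  rw [expSum, Finset.mul_sum]
  refine (Finset.abs_sum_le_sum_abs _ _).trans (Finset.sum_le_sum fun i _ => ?_)
  have hle : |b i ^ k * Real.exp (b i * s)| ≤ D :=
    (norm_le_pi_norm (fun i => b i ^ k * Real.exp (b i * s)) i).trans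
      (hD s (Metric.ball_subset_closedBall hs))
  rw [← mul_assoc, abs_mul, abs_of_nonneg (ha0 i x)]
  exact mul_le_mul_of_nonneg_right hle (ha0 i x)

variable [MeasurableSpace X] {μ : Measure X} {a : ι → X → ℝ}

@[fun_prop]
lemma measurable_expSum (b : ι → ℝ) (ha : ∀ i, Measurable (a i)) (k : ℕ) (t : ℝ) :
    Measurable (expSum b a k t) := by
  unfold expSum
  fun_prop

/- On a neighbourhood of `t` the integrands `g e^{-expSum}` are dominated by `D S^n e^{-cS}`,
where `S = ∑ i, a i`. -/
lemma exists_integrable_bound (b : ι → ℝ) (ha : ∀ i, Measurable (a i)) (ha0 : ∀ i x, 0 ≤ a i x)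
    (hint : ∀ c : ℝ, 0 < c → Integrable (fun x => Real.exp (-(c * ∑ i, a i x))) μ) (n : ℕ)
    (t D : ℝ) :
    ∃ B : X → ℝ, Integrable B μ ∧ ∀ s ∈ Metric.ball t 1, ∀ x y, |y| ≤ D * (∑ i, a i x) ^ n →
      ‖y * Real.exp (-expSum b a 0 s x)‖ ≤ B x := by
  obtain ⟨c, hc, hcS⟩ := exists_mul_sum_le_expSum_zero b ha0 t
  have hS0 (x : X) : 0 ≤ ∑ i, a i x := Finset.sum_nonneg fun i _ => ha0 i x
  have hS : AEStronglyMeasurable (fun x => ∑ i, a i x) μ :=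
    (Finset.measurable_sum _ fun i _ => ha i).aestronglyMeasurable
  refine ⟨_, (integrable_pow_mul_exp_neg hS hS0 hint hc n).const_mul D, fun s hs x y hy => ?_⟩
  rw [norm_mul, Real.norm_eq_abs, Real.norm_of_nonneg (Real.exp_nonneg _), ← mul_assoc]
  have hexp : Real.exp (-expSum b a 0 s x) ≤ Real.exp (-(c * ∑ i, a i x)) :=
    Real.exp_le_exp.2 (neg_le_neg (hcS s hs x))
  exact mul_le_mul hy hexp (Real.exp_nonneg _) ((abs_nonneg y).trans hy)

variable (b : ι → ℝ)

lemma integrable_mul_exp_neg_expSum (ha : ∀ i, Measurable (a i)) (ha0 : ∀ i x, 0 ≤ a i x)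
    (hint : ∀ c : ℝ, 0 < c → Integrable (fun x => Real.exp (-(c * ∑ i, a i x))) μ) {g : X → ℝ}
    (hg : Measurable g) {n : ℕ} {t D : ℝ} (hgD : ∀ x, |g x| ≤ D * (∑ i, a i x) ^ n) :
    Integrable (fun x => g x * Real.exp (-expSum b a 0 t x)) μ := by
  obtain ⟨B, hB, hle⟩ := exists_integrable_bound b ha ha0 hint n t D
  exact hB.mono' (by fun_prop)
    (ae_of_all _ fun x => hle t (Metric.mem_ball_self one_pos) x _ (hgD x))

lemma integrable_exp_neg_expSum (ha : ∀ i, Measurable (a i)) (ha0 : ∀ i x, 0 ≤ a i x)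
    (hint : ∀ c : ℝ, 0 < c → Integrable (fun x => Real.exp (-(c * ∑ i, a i x))) μ) (t : ℝ) :
    Integrable (fun x => Real.exp (-expSum b a 0 t x)) μ := by
  simpa using integrable_mul_exp_neg_expSum b ha ha0 hint (g := fun _ => 1) measurable_const
    (n := 0) (D := 1) (t := t) (by simp)

lemma integrable_expSum_mul_exp_neg (ha : ∀ i, Measurable (a i)) (ha0 : ∀ i x, 0 ≤ a i x)
    (hint : ∀ c : ℝ, 0 < c → Integrable (fun x => Real.exp (-(c * ∑ i, a i x))) μ) (k : ℕ)
    (t : ℝ) : Integrable (fun x => expSum b a k t x * Real.exp (-expSum b a 0 t x)) μ := by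
  obtain ⟨D, hD⟩ := exists_abs_expSum_le b ha0 k t
  exact integrable_mul_exp_neg_expSum b ha ha0 hint (by fun_prop) (n := 1) (D := D)
    (by simpa using hD t (Metric.mem_ball_self one_pos))

lemma integrable_expSum_sq_mul_exp_neg (ha : ∀ i, Measurable (a i)) (ha0 : ∀ i x, 0 ≤ a i x)
    (hint : ∀ c : ℝ, 0 < c → Integrable (fun x => Real.exp (-(c * ∑ i, a i x))) μ) (k : ℕ)
    (t : ℝ) : Integrable (fun x => expSum b a k t x ^ 2 * Real.exp (-expSum b a 0 t x)) μ := by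
  obtain ⟨D, hD⟩ := exists_abs_expSum_le b ha0 k t
  refine integrable_mul_exp_neg_expSum b ha ha0 hint (by fun_prop) (n := 2) (D := D ^ 2)
    fun x => ?_
  rw [abs_pow, ← mul_pow]
  exact pow_le_pow_left₀ (abs_nonneg _) (hD t (Metric.mem_ball_self one_pos) x) 2

lemma integrable_expSum_sub_sq_mul_exp_neg (ha : ∀ i, Measurable (a i)) (ha0 : ∀ i x, 0 ≤ a i x)
    (hint : ∀ c : ℝ, 0 < c → Integrable (fun x => Real.exp (-(c * ∑ i, a i x))) μ) (k : ℕ)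
    (t m : ℝ) :
    Integrable (fun x => (expSum b a k t x - m) ^ 2 * Real.exp (-expSum b a 0 t x)) μ := by
  refine (((integrable_expSum_sq_mul_exp_neg b ha ha0 hint k t).sub
    ((integrable_expSum_mul_exp_neg b ha ha0 hint k t).const_mul (2 * m))).add
    ((integrable_exp_neg_expSum b ha ha0 hint t).const_mul (m ^ 2))).congr (ae_of_all _ fun x => ?_)
  simp only [Pi.add_apply, Pi.sub_apply]
  ring

lemma hasDerivAt_integral_exp_neg_expSum (ha : ∀ i, Measurable (a i)) (ha0 : ∀ i x, 0 ≤ a i x)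
    (hint : ∀ c : ℝ, 0 < c → Integrable (fun x => Real.exp (-(c * ∑ i, a i x))) μ) (t : ℝ) :
    HasDerivAt (fun s => ∫ x, Real.exp (-expSum b a 0 s x) ∂μ)
      (∫ x, -expSum b a 1 t x * Real.exp (-expSum b a 0 t x) ∂μ) t := by
  obtain ⟨D, hD⟩ := exists_abs_expSum_le b ha0 1 t
  obtain ⟨B, hB, hle⟩ := exists_integrable_bound b ha ha0 hint 1 t D
  refine (hasDerivAt_integral_of_dominated_loc_of_deriv_le (Metric.ball_mem_nhds t one_pos)
    (F' := fun s x => -expSum b a 1 s x * Real.exp (-expSum b a 0 s x))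
    (.of_forall fun s => by fun_prop) (integrable_exp_neg_expSum b ha ha0 hint t) (by fun_prop)
    (ae_of_all _ fun x s hs => hle s hs x _ ?_) hB (ae_of_all _ fun x s _ => ?_)).2
  · simpa using hD s hs x
  · exact (hasDerivAt_expSum b a 0 s x).fun_neg.exp.congr_deriv (mul_comm _ _)

lemma hasDerivAt_integral_expSum_mul_exp_neg (ha : ∀ i, Measurable (a i))
    (ha0 : ∀ i x, 0 ≤ a i x)
    (hint : ∀ c : ℝ, 0 < c → Integrable (fun x => Real.exp (-(c * ∑ i, a i x))) μ) (t : ℝ) :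
    HasDerivAt (fun s => ∫ x, -expSum b a 1 s x * Real.exp (-expSum b a 0 s x) ∂μ)
      (∫ x, (expSum b a 1 t x ^ 2 - expSum b a 2 t x) * Real.exp (-expSum b a 0 t x) ∂μ) t := by
  obtain ⟨D₁, hD₁⟩ := exists_abs_expSum_le b ha0 1 t
  obtain ⟨D₂, hD₂⟩ := exists_abs_expSum_le b ha0 2 t
  obtain ⟨B₁, hB₁, hle₁⟩ := exists_integrable_bound b ha ha0 hint 2 t (D₁ ^ 2)
  obtain ⟨B₂, hB₂, hle₂⟩ := exists_integrable_bound b ha ha0 hint 1 t D₂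
  have hint1 : Integrable (fun x => -expSum b a 1 t x * Real.exp (-expSum b a 0 t x)) μ := by
    simp only [neg_mul]
    exact (integrable_expSum_mul_exp_neg b ha ha0 hint 1 t).neg
  refine (hasDerivAt_integral_of_dominated_loc_of_deriv_le (Metric.ball_mem_nhds t one_pos)
    (F' := fun s x => (expSum b a 1 s x ^ 2 - expSum b a 2 s x) * Real.exp (-expSum b a 0 s x))
    (.of_forall fun s => by fun_prop) hint1 (by fun_prop)
    (ae_of_all _ fun x s hs => ?_) (hB₁.add hB₂) (ae_of_all _ fun x s _ => ?_)).2
  · rw [sub_mul]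
    refine (norm_sub_le _ _).trans (add_le_add (hle₁ s hs x _ ?_) (hle₂ s hs x _ ?_))
    · rw [abs_pow, ← mul_pow]
      exact pow_le_pow_left₀ (abs_nonneg _) (hD₁ s hs x) 2
    · simpa using hD₂ s hs x
  · refine ((hasDerivAt_expSum b a 1 s x).fun_neg.fun_mul
      (hasDerivAt_expSum b a 0 s x).fun_neg.exp).congr_deriv ?_
    ring

lemma concaveOn_log_integral_exp_neg_expSum [NeZero μ] (ha : ∀ i, Measurable (a i))
    (ha0 : ∀ i x, 0 ≤ a i x)
    (hint : ∀ c : ℝ, 0 < c → Integrable (fun x => Real.exp (-(c * ∑ i, a i x))) μ)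
    (hvar : ∀ t m, ∫ x, (expSum b a 1 t x - m) * Real.exp (-expSum b a 0 t x) ∂μ = 0 →
      ∫ x, (expSum b a 1 t x - m) ^ 2 * Real.exp (-expSum b a 0 t x) ∂μ ≤
        ∫ x, expSum b a 2 t x * Real.exp (-expSum b a 0 t x) ∂μ) :
    ConcaveOn ℝ univ fun t => Real.log (∫ x, Real.exp (-expSum b a 0 t x) ∂μ) := by
  have hw := integrable_exp_neg_expSum b ha ha0 hint
  refine concaveOn_log_of_mul_le_sq (fun t => integral_exp_pos (hw t))
    (hasDerivAt_integral_exp_neg_expSum b ha ha0 hint)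
    (hasDerivAt_integral_expSum_mul_exp_neg b ha ha0 hint) fun t => ?_
  have hle := sub_mul_integral_le_sq (hw t) (integrable_expSum_mul_exp_neg b ha ha0 hint 1 t)
    (integrable_expSum_sq_mul_exp_neg b ha ha0 hint 1 t) (integral_exp_pos (hw t)) (hvar t)
  simp only [sub_mul (_ ^ 2), neg_mul]
  rwa [integral_neg, neg_sq, integral_sub (integrable_expSum_sq_mul_exp_neg b ha ha0 hint 1 t)
    (integrable_expSum_mul_exp_neg b ha ha0 hint 2 t)]

end ExpSum

section ExpDecay

variable {E : Type*} [NormedAddCommGroup E] [NormedSpace ℝ E] [FiniteDimensional ℝ E]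
  [MeasurableSpace E] [BorelSpace E] (μ : Measure E) [μ.IsAddHaarMeasure]

lemma integrable_exp_neg_mul_norm {a : ℝ} (ha : 0 < a) :
    Integrable (fun x => Real.exp (-(a * ‖x‖))) μ := by
  set k := Module.finrank ℝ E + 1
  have hk : (Module.finrank ℝ E : ℝ) < (k : ℝ) := by exact_mod_cast Nat.lt_succ_self _
  refine ((integrable_one_add_norm (μ := μ) hk).const_mul
    (Real.exp a * (k.factorial / a ^ k))).mono' (by fun_prop) (ae_of_all _ fun x => ?_)
  have hpow := Real.pow_div_factorial_le_exp _ (by positivity : 0 ≤ a * (1 + ‖x‖)) k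
  rw [Real.norm_of_nonneg (Real.exp_nonneg _), Real.rpow_neg (by positivity), Real.rpow_natCast]
  calc Real.exp (-(a * ‖x‖)) = Real.exp a * (Real.exp (a * (1 + ‖x‖)))⁻¹ := by
        rw [← Real.exp_neg, ← Real.exp_add]; ring_nf
    _ ≤ Real.exp a * ((a * (1 + ‖x‖)) ^ k / k.factorial)⁻¹ := by gcongr
    _ = Real.exp a * (k.factorial / a ^ k) * ((1 + ‖x‖) ^ k)⁻¹ := by
        rw [mul_pow]; field_simp

end ExpDecay

lemma rpow_mul_rpow_le_of_concaveOn_log {f : ℝ → ℝ} (hf : ∀ t, 0 < f t)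
    (hconcave : ConcaveOn ℝ univ fun t => Real.log (f t)) {l : ℝ} (hl : l ∈ Icc (0 : ℝ) 1) :
    f 0 ^ (1 - l) * f 1 ^ l ≤ f l := by
  have hlog := hconcave.2 (mem_univ 0) (mem_univ 1) (sub_nonneg.2 hl.2) hl.1 (sub_add_cancel 1 l)
  simp only [smul_eq_mul, mul_zero, mul_one, zero_add] at hlog
  rw [Real.rpow_def_of_pos (hf 0), Real.rpow_def_of_pos (hf 1), ← Real.exp_add,
    ← Real.le_log_iff_exp_le (hf l), mul_comm, mul_comm (Real.log (f 1))]
  exact hlog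

lemma div_rpow_mul_rpow_pow {r s : ℝ} (hr : 0 < r) (hs : 0 < s) (y t : ℝ) (k : ℕ) :
    (y / (r ^ (1 - t) * s ^ t)) ^ k =
      Real.exp (k * Real.log (r / s) * t) * (y / r) ^ k := by
  have hexp : Real.exp (k * Real.log (r / s) * t) = ((r / s) ^ t) ^ k := by
    rw [Real.rpow_def_of_pos (div_pos hr hs), ← Real.exp_nat_mul, mul_assoc]
  rw [hexp, ← mul_pow, Real.rpow_sub hr, Real.rpow_one, Real.div_rpow hr.le hs.le]
  field_simp

section Polydisc

variable {E : Type*} [NormedAddCommGroup E] [NormedSpace ℂ E] {ι : Type*}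

/-- The closed polydisc with polyradius `r` in the (possibly dependent) coordinates `ℓ`. -/
def polydisc (ℓ : ι → E →L[ℂ] ℂ) (r : ι → ℝ) : Set E :=
  {x | ∀ i, ‖ℓ i x‖ ≤ r i}

variable {ℓ : ι → E →L[ℂ] ℂ} {r s : ι → ℝ}

lemma isClosed_polydisc (ℓ : ι → E →L[ℂ] ℂ) (r : ι → ℝ) : IsClosed (polydisc ℓ r) := by
  simp only [polydisc, ofPred_forall]
  exact isClosed_iInter fun i => isClosed_le (ℓ i).continuous.norm continuous_const

variable [Fintype ι]

lemma tendsto_exp_neg_sum_norm_div_pow (hr : ∀ i, 0 < r i) {x : E} (hx : ∀ i, ‖ℓ i x‖ ≠ r i) :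
    Tendsto (fun p : ℕ => Real.exp (-∑ i, (‖ℓ i x‖ / r i) ^ (2 * (p + 1)))) atTop
      (𝓝 ((polydisc ℓ r).indicator 1 x)) := by
  have hexponent : Tendsto (fun p : ℕ => 2 * (p + 1)) atTop atTop :=
    tendsto_atTop_mono (fun p => (by lia : p ≤ 2 * (p + 1))) tendsto_id
  by_cases hmem : x ∈ polydisc ℓ r
  · rw [indicator_of_mem hmem]
    have hlim (i : ι) : Tendsto (fun p : ℕ => (‖ℓ i x‖ / r i) ^ (2 * (p + 1))) atTop (𝓝 0) :=
      (tendsto_pow_atTop_nhds_zero_of_lt_one (div_nonneg (norm_nonneg _) (hr i).le)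
        ((div_lt_one (hr i)).2 ((hmem i).lt_of_ne (hx i)))).comp hexponent
    simpa using (tendsto_finsetSum Finset.univ fun i _ => hlim i).neg.rexp
  · rw [indicator_of_notMem hmem]
    obtain ⟨i, hi⟩ : ∃ i, r i < ‖ℓ i x‖ := by simpa [polydisc] using hmem
    refine Real.tendsto_exp_neg_atTop_nhds_zero.comp (tendsto_atTop_mono (fun p => ?_)
      ((tendsto_pow_atTop_atTop_of_one_lt ((one_lt_div (hr i)).2 hi)).comp hexponent))
    exact Finset.single_le_sum (f := fun i => (‖ℓ i x‖ / r i) ^ (2 * (p + 1)))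
      (fun i _ => (even_two_mul _).pow_nonneg _) (Finset.mem_univ i)

lemma exp_neg_mul_sum_norm_div_pow_le (ℓ : ι → E →L[ℂ] ℂ) (hr : ∀ i, 0 < r i) {c : ℝ}
    (hc : 0 ≤ c) {k : ℕ} (hk : k ≠ 0) (x : E) :
    Real.exp (-(c * ∑ i, (‖ℓ i x‖ / r i) ^ k)) ≤
      Real.exp (c * Fintype.card ι) * Real.exp (-(c * ∑ i, ‖ℓ i x‖ / r i)) := by
  have hterm (i : ι) : ‖ℓ i x‖ / r i ≤ 1 + (‖ℓ i x‖ / r i) ^ k := by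
    have hnonneg : 0 ≤ ‖ℓ i x‖ / r i := div_nonneg (norm_nonneg _) (hr i).le
    rcases le_total (‖ℓ i x‖ / r i) 1 with hle | hge
    · linarith [pow_nonneg hnonneg k]
    · linarith [le_self_pow₀ hge hk]
  have hsum := Finset.sum_le_sum fun i (_ : i ∈ Finset.univ) => hterm i
  rw [Finset.sum_add_distrib, Finset.sum_const, Finset.card_univ, nsmul_one] at hsum
  rw [← Real.exp_add, Real.exp_le_exp]
  linarith [mul_le_mul_of_nonneg_left hsum hc]

variable [FiniteDimensional ℂ E]

lemma exists_mul_norm_le_sum_norm_div (hℓ : ∀ x, (∀ i, ℓ i x = 0) → x = 0)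
    (hr : ∀ i, 0 < r i) : ∃ a, 0 < a ∧ ∀ x, a * ‖x‖ ≤ ∑ i, ‖ℓ i x‖ / r i := by
  let L : E →ₗ[ℂ] ι → ℂ := LinearMap.pi fun i => ((r i : ℂ)⁻¹ • ℓ i : E →L[ℂ] ℂ)
  have hL : LinearMap.ker L = ⊥ := by
    refine LinearMap.ker_eq_bot'.2 fun x hx => hℓ x fun i => ?_
    simpa [L, (hr i).ne'] using congrFun hx i
  obtain ⟨K, hK, hanti⟩ := L.exists_antilipschitzWith hL
  have hK0 : (0 : ℝ) < K := hK
  refine ⟨(K : ℝ)⁻¹, inv_pos.2 hK0, fun x => ?_⟩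
  have hnonneg (i : ι) : 0 ≤ ‖ℓ i x‖ / r i := div_nonneg (norm_nonneg _) (hr i).le
  rw [inv_mul_le_iff₀ hK0]
  refine (hanti.le_mul_norm (map_zero L) x).trans (mul_le_mul_of_nonneg_left ?_ hK0.le)
  refine (pi_norm_le_iff_of_nonneg (Finset.sum_nonneg fun i _ => hnonneg i)).2 fun i => ?_
  have hLi : ‖L x i‖ = ‖ℓ i x‖ / r i := by
    simp [L, abs_of_pos (hr i), div_eq_inv_mul]
  rw [hLi]
  exact Finset.single_le_sum (f := fun i => ‖ℓ i x‖ / r i) (fun i _ => hnonneg i)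
    (Finset.mem_univ i)

omit [Fintype ι] in
lemma isCompact_polydisc [Finite ι] (hℓ : ∀ x, (∀ i, ℓ i x = 0) → x = 0) (r : ι → ℝ) :
    IsCompact (polydisc ℓ r) := by
  cases nonempty_fintype ι
  have : ProperSpace E := FiniteDimensional.proper ℂ E
  obtain ⟨a, ha, hle⟩ := exists_mul_norm_le_sum_norm_div hℓ fun _ => one_pos
  refine (isCompact_closedBall 0 (a⁻¹ * ∑ i, r i)).of_isClosed_subset (isClosed_polydisc ℓ r)
    fun x hx => ?_
  rw [mem_closedBall_zero_iff, le_inv_mul_iff₀ ha]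
  refine (hle x).trans (Finset.sum_le_sum fun i _ => ?_)
  rw [div_one]
  exact hx i

variable [MeasurableSpace E] [BorelSpace E] {μ : Measure E} [μ.IsAddHaarMeasure]

lemma integrable_exp_neg_mul_sum_norm_div (hℓ : ∀ x, (∀ i, ℓ i x = 0) → x = 0)
    (hr : ∀ i, 0 < r i) {c : ℝ} (hc : 0 < c) :
    Integrable (fun x => Real.exp (-(c * ∑ i, ‖ℓ i x‖ / r i))) μ := by
  obtain ⟨a, ha, hle⟩ := exists_mul_norm_le_sum_norm_div hℓ hr
  refine (integrable_exp_neg_mul_norm μ (mul_pos hc ha)).mono' (by fun_prop)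
    (ae_of_all _ fun x => ?_)
  rw [Real.norm_of_nonneg (Real.exp_nonneg _), Real.exp_le_exp, neg_le_neg_iff, mul_assoc]
  exact mul_le_mul_of_nonneg_left (hle x) hc.le

lemma integrable_exp_neg_mul_sum_norm_div_pow (hℓ : ∀ x, (∀ i, ℓ i x = 0) → x = 0)
    (hr : ∀ i, 0 < r i) {c : ℝ} (hc : 0 < c) {k : ℕ} (hk : k ≠ 0) :
    Integrable (fun x => Real.exp (-(c * ∑ i, (‖ℓ i x‖ / r i) ^ k))) μ := by
  refine ((integrable_exp_neg_mul_sum_norm_div hℓ hr hc).const_mul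
    (Real.exp (c * Fintype.card ι))).mono' (by fun_prop) (ae_of_all _ fun x => ?_)
  rw [Real.norm_of_nonneg (Real.exp_nonneg _)]
  exact exp_neg_mul_sum_norm_div_pow_le ℓ hr hc.le hk x

lemma addHaar_norm_eq_eq_zero (f : E →L[ℂ] ℂ) {ρ : ℝ} (hρ : 0 < ρ) :
    μ {x | ‖f x‖ = ρ} = 0 := by
  rcases eq_or_ne f 0 with rfl | hf
  · simp [hρ.ne]
  have : CompleteSpace E := FiniteDimensional.complete ℂ E
  have hsurj : Function.Surjective f :=
    LinearMap.surjective (f := f.toLinearMap) fun h =>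
      hf (ContinuousLinearMap.coe_injective h)
  have hfrontier : frontier (f ⁻¹' Metric.closedBall 0 ρ) = {x | ‖f x‖ = ρ} := by
    rw [f.frontier_preimage hsurj, frontier_closedBall' (0 : ℂ) ρ]
    ext x
    simp
  rw [← hfrontier]
  exact ((convex_closedBall 0 ρ).linear_preimage
    (f.restrictScalars ℝ).toLinearMap).addHaar_frontier μ

lemma tendsto_integral_exp_neg_sum_norm_div_pow (hℓ : ∀ x, (∀ i, ℓ i x = 0) → x = 0)
    (hr : ∀ i, 0 < r i) :
    Tendsto (fun p : ℕ => ∫ x, Real.exp (-∑ i, (‖ℓ i x‖ / r i) ^ (2 * (p + 1))) ∂μ) atTop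
      (𝓝 (μ.real (polydisc ℓ r))) := by
  rw [← integral_indicator_one (isClosed_polydisc ℓ r).measurableSet]
  have hne : ∀ᵐ x ∂μ, ∀ i, ‖ℓ i x‖ ≠ r i :=
    ae_all_iff.2 fun i => measure_eq_zero_iff_ae_notMem.1 (addHaar_norm_eq_eq_zero (ℓ i) (hr i))
  refine tendsto_integral_of_dominated_convergence _ (fun p => by fun_prop)
    ((integrable_exp_neg_mul_sum_norm_div hℓ hr one_pos).const_mul
      (Real.exp (1 * Fintype.card ι))) (fun p => ae_of_all _ fun x => ?_)
    (hne.mono fun x hx => tendsto_exp_neg_sum_norm_div_pow hr hx)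
  rw [Real.norm_of_nonneg (Real.exp_nonneg _)]
  simpa only [one_mul] using
    exp_neg_mul_sum_norm_div_pow_le ℓ hr zero_le_one (by lia : 2 * (p + 1) ≠ 0) x

lemma concaveOn_log_integral_exp_neg_sum_norm_div_pow (b : ι → ℝ)
    (hℓ : ∀ x, (∀ i, ℓ i x = 0) → x = 0) (hr : ∀ i, 0 < r i) {p : ℕ} (hp : p ≠ 0) :
    ConcaveOn ℝ univ fun t => Real.log
      (∫ x, Real.exp (-expSum b (fun i x => (‖ℓ i x‖ / r i) ^ (2 * p)) 0 t x) ∂μ) := by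
  set a : ι → E → ℝ := fun i x => (‖ℓ i x‖ / r i) ^ (2 * p)
  have ha (i : ι) : Measurable (a i) := by fun_prop
  have ha0 (i : ι) (x : E) : 0 ≤ a i x := (even_two_mul _).pow_nonneg _
  have hint (c : ℝ) (hc : 0 < c) : Integrable (fun x => Real.exp (-(c * ∑ i, a i x))) μ :=
    integrable_exp_neg_mul_sum_norm_div_pow hℓ hr hc (by lia)
  refine concaveOn_log_integral_exp_neg_expSum b ha ha0 hint fun t m hm => ?_
  set F : ι → E → ℂ := fun i x => ((Real.exp (b i * t / 2) / r i ^ p : ℝ) : ℂ) * ℓ i x ^ p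
  have hF (i : ι) (x : E) : ‖F i x‖ ^ 2 = Real.exp (b i * t) * a i x := by
    have hexp : Real.exp (b i * t) = Real.exp (b i * t / 2) ^ 2 := by
      rw [← Real.exp_nat_mul]; congr 1; push_cast; ring
    simp only [F, a, hexp, norm_mul, norm_pow, Complex.norm_real, norm_div, Real.norm_eq_abs,
      Real.abs_exp, abs_of_pos (hr i)]
    ring
  have hS (k : ℕ) (x : E) : ∑ i, b i ^ k * ‖F i x‖ ^ 2 = expSum b a k t x := by
    simp only [expSum, hF]
  have hS0 (x : E) : ∑ i, ‖F i x‖ ^ 2 = expSum b a 0 t x := by simpa using hS 0 x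
  have hS1 (x : E) : ∑ i, b i * ‖F i x‖ ^ 2 = expSum b a 1 t x := by simpa using hS 1 x
  have hvar := integral_sub_sq_mul_exp_neg_sum_norm_sq_le (μ := μ) (F := F) b m
    (fun i => by fun_prop) fun i c x hc => by simp [F, hc]
  simp only [hS, hS0, hS1] at hvar
  exact hvar (integrable_exp_neg_expSum b ha ha0 hint t)
    (integrable_expSum_sub_sq_mul_exp_neg b ha ha0 hint 1 t m)
    (integrable_expSum_mul_exp_neg b ha ha0 hint 2 t) hm

lemma integral_exp_neg_sum_norm_div_pow_rpow_mul_le (hℓ : ∀ x, (∀ i, ℓ i x = 0) → x = 0)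
    (hr : ∀ i, 0 < r i) (hs : ∀ i, 0 < s i) {p : ℕ} (hp : p ≠ 0) {l : ℝ} (hl : l ∈ Icc (0 : ℝ) 1) :
    (∫ x, Real.exp (-∑ i, (‖ℓ i x‖ / r i) ^ (2 * p)) ∂μ) ^ (1 - l) *
        (∫ x, Real.exp (-∑ i, (‖ℓ i x‖ / s i) ^ (2 * p)) ∂μ) ^ l ≤
      ∫ x, Real.exp (-∑ i, (‖ℓ i x‖ / (r i ^ (1 - l) * s i ^ l)) ^ (2 * p)) ∂μ := by
  set f : ℝ → ℝ := fun t =>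
    ∫ x, Real.exp (-∑ i, (‖ℓ i x‖ / (r i ^ (1 - t) * s i ^ t)) ^ (2 * p)) ∂μ
  have hf : f = fun t => ∫ x, Real.exp (-expSum (fun i => (2 * p : ℕ) * Real.log (r i / s i))
      (fun i x => (‖ℓ i x‖ / r i) ^ (2 * p)) 0 t x) ∂μ := by
    simp only [f, expSum, pow_zero, one_mul, div_rpow_mul_rpow_pow (hr _) (hs _)]
  have hpos (t : ℝ) : 0 < f t := by
    have hmean (i : ι) : 0 < r i ^ (1 - t) * s i ^ t :=
      mul_pos (Real.rpow_pos_of_pos (hr i) _) (Real.rpow_pos_of_pos (hs i) _)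
    refine integral_exp_pos ?_
    simpa only [one_mul] using
      integrable_exp_neg_mul_sum_norm_div_pow hℓ hmean one_pos (by lia : 2 * p ≠ 0)
  have hconcave : ConcaveOn ℝ univ fun t => Real.log (f t) := by
    rw [hf]
    exact concaveOn_log_integral_exp_neg_sum_norm_div_pow _ hℓ hr hp
  simpa [f] using rpow_mul_rpow_le_of_concaveOn_log hpos hconcave hl

omit [Fintype ι] in
lemma measure_polydisc_rpow_mul_le [Finite ι] (hℓ : ∀ x, (∀ i, ℓ i x = 0) → x = 0)
    (hr : ∀ i, 0 < r i) (hs : ∀ i, 0 < s i) {l : ℝ} (hl : l ∈ Icc (0 : ℝ) 1) :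
    μ (polydisc ℓ r) ^ (1 - l) * μ (polydisc ℓ s) ^ l ≤
      μ (polydisc ℓ fun i => r i ^ (1 - l) * s i ^ l) := by
  cases nonempty_fintype ι
  have hl' : 0 ≤ 1 - l := sub_nonneg.2 hl.2
  have hmean (i : ι) : 0 < r i ^ (1 - l) * s i ^ l :=
    mul_pos (Real.rpow_pos_of_pos (hr i) _) (Real.rpow_pos_of_pos (hs i) _)
  have hreal : μ.real (polydisc ℓ r) ^ (1 - l) * μ.real (polydisc ℓ s) ^ l ≤
      μ.real (polydisc ℓ fun i => r i ^ (1 - l) * s i ^ l) :=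
    le_of_tendsto_of_tendsto'
      (((tendsto_integral_exp_neg_sum_norm_div_pow hℓ hr).rpow_const (Or.inr hl')).mul
        ((tendsto_integral_exp_neg_sum_norm_div_pow hℓ hs).rpow_const (Or.inr hl.1)))
      (tendsto_integral_exp_neg_sum_norm_div_pow hℓ hmean) fun p =>
        integral_exp_neg_sum_norm_div_pow_rpow_mul_le hℓ hr hs p.succ_ne_zero hl
  have hfin (t : ι → ℝ) : μ (polydisc ℓ t) ≠ ⊤ := (isCompact_polydisc hℓ t).measure_lt_top.ne
  rw [← ENNReal.toReal_le_toReal (ENNReal.mul_ne_top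
    (ENNReal.rpow_ne_top_of_nonneg hl' (hfin r)) (ENNReal.rpow_ne_top_of_nonneg hl.1 (hfin s)))
    (hfin _), ENNReal.toReal_mul, ← ENNReal.toReal_rpow, ← ENNReal.toReal_rpow]
  exact hreal

end Polydisc

section LogMean

variable {n : ℕ} {K T : Set (Fin n → ℂ)} {l : ℝ}

/-- The complex inner product against `θ`, whose real part is `crinner · θ`, as a linear form. -/
def cxInner (θ : Fin n → ℂ) : (Fin n → ℂ) →L[ℂ] ℂ :=
  ∑ j, conj (θ j) • ContinuousLinearMap.proj j

lemma cxInner_apply (θ x : Fin n → ℂ) : cxInner θ x = ∑ j, x j * conj (θ j) := by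
  simp [cxInner, mul_comm]

lemma crinner_eq_re_cxInner (x θ : Fin n → ℂ) : crinner x θ = (cxInner θ x).re := by
  rw [cxInner_apply, crinner]

lemma cxInner_single (j : Fin n) (x : Fin n → ℂ) : cxInner (Pi.single j 1) x = x j := by
  simp [cxInner_apply, Pi.single_apply]

@[fun_prop]
lemma continuous_crinner {X : Type*} [TopologicalSpace X] {f g : X → Fin n → ℂ}
    (hf : Continuous f) (hg : Continuous g) : Continuous fun x => crinner (f x) (g x) := by
  unfold crinner
  fun_prop

lemma IsCxBody.smul_mem (hK : IsCxBody K) (c : ℂ) (hc : ‖c‖ = 1) (x : Fin n → ℂ) (hx : x ∈ K) :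
    c • x ∈ K := by
  obtain ⟨φ, rfl⟩ := (Complex.norm_eq_one_iff c).1 hc
  exact hK.2.2.2.2 φ ▸ mem_image_of_mem _ hx

lemma continuous_csuppFn (hK : IsCompact K) : Continuous (csuppFn K) :=
  hK.continuous_sSup (f := fun θ x => crinner x θ) (by fun_prop)

lemma crinner_le_csuppFn (hK : IsCompact K) {x : Fin n → ℂ} (hx : x ∈ K) (θ : Fin n → ℂ) :
    crinner x θ ≤ csuppFn K θ := by
  have hcont : Continuous fun y => crinner y θ := by fun_prop
  exact le_csSup (hK.image hcont).bddAbove (mem_image_of_mem _ hx)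

lemma norm_cxInner_le_csuppFn (hK : IsCompact K) (hKc : ∀ c : ℂ, ‖c‖ = 1 → ∀ x ∈ K, c • x ∈ K)
    {x : Fin n → ℂ} (hx : x ∈ K) (θ : Fin n → ℂ) : ‖cxInner θ x‖ ≤ csuppFn K θ := by
  obtain ⟨c, hc, hcx⟩ := RCLike.exists_norm_eq_mul_self (cxInner θ x)
  have hrot : crinner (c • x) θ = ‖cxInner θ x‖ := by
    rw [crinner_eq_re_cxInner, map_smul, smul_eq_mul, ← hcx, RCLike.ofReal_eq_complex_ofReal,
      Complex.ofReal_re]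
  exact hrot ▸ crinner_le_csuppFn hK (hKc c hc x hx) θ

lemma csuppFn_nonneg (hK : IsCompact K) (hK0 : K.Nonempty)
    (hKc : ∀ c : ℂ, ‖c‖ = 1 → ∀ x ∈ K, c • x ∈ K) (θ : Fin n → ℂ) : 0 ≤ csuppFn K θ :=
  (norm_nonneg _).trans (norm_cxInner_le_csuppFn hK hKc hK0.some_mem θ)

/-- The coordinate directions, which make the outer polydiscs bounded, followed by the first `N`
terms of a dense sequence. -/
def testDirection (n N : ℕ) : Fin n ⊕ Fin N → Fin n → ℂ :=
  Sum.elim (fun j => Pi.single j 1) fun k => TopologicalSpace.denseSeq (Fin n → ℂ) k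

lemma eq_zero_of_cxInner_testDirection (N : ℕ) (x : Fin n → ℂ)
    (hx : ∀ i, cxInner (testDirection n N i) x = 0) : x = 0 :=
  funext fun j => by simpa [testDirection, cxInner_single] using hx (Sum.inl j)

/-- The polydisc cut out by the constraints of `clogMean l K T` in finitely many directions, with
both support functions enlarged by `1 / (N + 1)` to make the polyradius positive. -/
def outerPolydisc (l : ℝ) (K T : Set (Fin n → ℂ)) (N : ℕ) : Set (Fin n → ℂ) :=
  polydisc (fun i => cxInner (testDirection n N i)) fun i =>
    (csuppFn K (testDirection n N i) + 1 / ((N : ℝ) + 1)) ^ (1 - l) *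
      (csuppFn T (testDirection n N i) + 1 / ((N : ℝ) + 1)) ^ l

lemma subset_polydisc_csuppFn_add (hK : IsCompact K)
    (hKc : ∀ c : ℂ, ‖c‖ = 1 → ∀ x ∈ K, c • x ∈ K) {ι : Type*} (θ : ι → Fin n → ℂ) {ε : ℝ}
    (hε : 0 ≤ ε) : K ⊆ polydisc (fun i => cxInner (θ i)) fun i => csuppFn K (θ i) + ε :=
  fun _ hx i => (norm_cxInner_le_csuppFn hK hKc hx (θ i)).trans (le_add_of_nonneg_right hε)

lemma antitone_outerPolydisc (hK : ∀ θ, 0 ≤ csuppFn K θ) (hT : ∀ θ, 0 ≤ csuppFn T θ)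
    (hl : l ∈ Icc (0 : ℝ) 1) : Antitone (outerPolydisc l K T) := by
  intro M N hMN x hx
  have hl' : 0 ≤ 1 - l := sub_nonneg.2 hl.2
  have hradius (θ : Fin n → ℂ) :
      (csuppFn K θ + 1 / ((N : ℝ) + 1)) ^ (1 - l) * (csuppFn T θ + 1 / ((N : ℝ) + 1)) ^ l ≤
        (csuppFn K θ + 1 / ((M : ℝ) + 1)) ^ (1 - l) * (csuppFn T θ + 1 / ((M : ℝ) + 1)) ^ l := by
    have hK := hK θ
    have hT := hT θ
    have hl0 := hl.1
    gcongr
  rintro (j | k)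
  · exact (hx (Sum.inl j)).trans (hradius _)
  · exact (hx (Sum.inr (Fin.castLE hMN k))).trans (hradius _)

lemma iInter_outerPolydisc_subset (hK : Continuous (csuppFn K)) (hT : Continuous (csuppFn T))
    (hl : l ∈ Icc (0 : ℝ) 1) : ⋂ N, outerPolydisc l K T N ⊆ clogMean l K T := by
  intro x hx θ
  have hl' : 0 ≤ 1 - l := sub_nonneg.2 hl.2
  have hclosed : IsClosed {θ | crinner x θ ≤ csuppFn K θ ^ (1 - l) * csuppFn T θ ^ l} :=
    isClosed_le (by fun_prop)
      ((hK.rpow_const fun _ => Or.inr hl').mul (hT.rpow_const fun _ => Or.inr hl.1))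
  refine (TopologicalSpace.denseRange_denseSeq (Fin n → ℂ)).induction_on
    (p := fun θ => crinner x θ ≤ csuppFn K θ ^ (1 - l) * csuppFn T θ ^ l) θ hclosed fun k => ?_
  set η := TopologicalSpace.denseSeq (Fin n → ℂ) k
  have hε := tendsto_one_div_add_atTop_nhds_zero_nat (𝕜 := ℝ)
  have hradius : Tendsto (fun N : ℕ => (csuppFn K η + 1 / ((N : ℝ) + 1)) ^ (1 - l) *
      (csuppFn T η + 1 / ((N : ℝ) + 1)) ^ l) atTop
      (𝓝 (csuppFn K η ^ (1 - l) * csuppFn T η ^ l)) := by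
    simpa using ((hε.const_add (csuppFn K η)).rpow_const (Or.inr hl')).mul
      ((hε.const_add (csuppFn T η)).rpow_const (Or.inr hl.1))
  refine ge_of_tendsto hradius (eventually_atTop.2 ⟨k + 1, fun N hN => ?_⟩)
  rw [crinner_eq_re_cxInner]
  exact (Complex.re_le_norm _).trans (mem_iInter.1 hx N (Sum.inr ⟨k, hN⟩))

lemma measure_rpow_mul_le_outerPolydisc (hK : IsCompact K) (hK0 : K.Nonempty)
    (hKc : ∀ c : ℂ, ‖c‖ = 1 → ∀ x ∈ K, c • x ∈ K) (hT : IsCompact T) (hT0 : T.Nonempty)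
    (hTc : ∀ c : ℂ, ‖c‖ = 1 → ∀ x ∈ T, c • x ∈ T) (hl : l ∈ Icc (0 : ℝ) 1) (N : ℕ) :
    volume K ^ (1 - l) * volume T ^ l ≤ volume (outerPolydisc l K T N) := by
  have hε : 0 < 1 / ((N : ℝ) + 1) := Nat.one_div_pos_of_nat
  refine le_trans (mul_le_mul' (ENNReal.rpow_le_rpow (measure_mono ?_) (sub_nonneg.2 hl.2))
    (ENNReal.rpow_le_rpow (measure_mono ?_) hl.1))
    (measure_polydisc_rpow_mul_le (eq_zero_of_cxInner_testDirection N)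
      (fun i => add_pos_of_nonneg_of_pos (csuppFn_nonneg hK hK0 hKc (testDirection n N i)) hε)
      (fun i => add_pos_of_nonneg_of_pos (csuppFn_nonneg hT hT0 hTc (testDirection n N i)) hε) hl)
  · exact subset_polydisc_csuppFn_add hK hKc _ hε.le
  · exact subset_polydisc_csuppFn_add hT hTc _ hε.le

end LogMean

theorem stmt_0_general {n : ℕ} {K T : Set (Fin n → ℂ)} (hK : IsCompact K) (hK0 : K.Nonempty)
    (hKc : ∀ c : ℂ, ‖c‖ = 1 → ∀ x ∈ K, c • x ∈ K) (hT : IsCompact T) (hT0 : T.Nonempty)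
    (hTc : ∀ c : ℂ, ‖c‖ = 1 → ∀ x ∈ T, c • x ∈ T) {l : ℝ} (hl : l ∈ Icc (0 : ℝ) 1) :
    volume K ^ (1 - l) * volume T ^ l ≤ volume (clogMean l K T) := by
  have hanti : Antitone (outerPolydisc l K T) :=
    antitone_outerPolydisc (csuppFn_nonneg hK hK0 hKc) (csuppFn_nonneg hT hT0 hTc) hl
  have hcompact (N : ℕ) : IsCompact (outerPolydisc l K T N) :=
    isCompact_polydisc (eq_zero_of_cxInner_testDirection N) _
  calc volume K ^ (1 - l) * volume T ^ l
      ≤ ⨅ N, volume (outerPolydisc l K T N) :=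
        le_iInf (measure_rpow_mul_le_outerPolydisc hK hK0 hKc hT hT0 hTc hl)
    _ = volume (⋂ N, outerPolydisc l K T N) :=
        (hanti.measure_iInter (fun N => (hcompact N).measurableSet.nullMeasurableSet)
          ⟨0, (hcompact 0).measure_lt_top.ne⟩).symm
    _ ≤ volume (clogMean l K T) := measure_mono
        (iInter_outerPolydisc_subset (continuous_csuppFn hK) (continuous_csuppFn hT) hl)

/-- The log-Brunn-Minkowski inequality for complex bodies. -/
theorem stmt_0 {n : ℕ} (K T : Set (Fin n → ℂ)) (hK : IsCxBody K) (hT : IsCxBody T)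
    (l : ℝ) (hl : l ∈ Icc (0 : ℝ) 1) :
    volume K ^ (1 - l) * volume T ^ l ≤ volume (clogMean l K T) :=
  stmt_0_general hK.2.2.1 (hK.2.2.2.1.mono interior_subset) hK.smul_mem
    hT.2.2.1 (hT.2.2.2.1.mono interior_subset) hT.smul_mem hl
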